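/- arXiv:1001.1032 — 2 statements merged into one kernel-verified Lean document; each statement's English description precedes it below -/
import Mathlib

section
/- Let d ∈ {2,3}, T ∈ (0,∞], L > 0, Γ > 0, ν > 0, a, b ∈ ℝ and c > 0, and let p ≥ 1 be an integer. Let Q : [0,T)×ℝ^d → S₀, u : [0,T)×ℝ^d → ℝ^d and P : [0,T)×ℝ^d → ℝ be smooth, with x ↦ Q(t,x), x ↦ u(t,x), x ↦ P(t,x) compactly supported uniformly on compact subintervals of [0,T), satisfying the coupled system pointwise. Then there exists a constant C, depending only on a, b, c, p and Γ, such that for all t ∈ [0,T): ∫_{ℝ^d} (tr(Q²(t,x)))^p dx ≤ e^{Ct} ∫_{ℝ^d} (tr(Q²(0,x)))^p dx. In particular ‖Q(t,·)‖_{L^{2p}} ≤ e^{Ct/(2p)} ‖Q(0,·)‖_{L^{2p}}. -/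
open MeasureTheory ENNReal

/-- time derivative of a function on `ℝ × ℝ^d`. -/
noncomputable def pt {d : ℕ} (f : ℝ × (Fin d → ℝ) → ℝ) (p : ℝ × (Fin d → ℝ)) : ℝ :=
  fderiv ℝ f p (1, 0)

/-- spatial partial derivative in the `γ`-th coordinate direction. -/
noncomputable def px {d : ℕ} (γ : Fin d) (f : ℝ × (Fin d → ℝ) → ℝ) (p : ℝ × (Fin d → ℝ)) : ℝ :=
  fderiv ℝ f p (0, Pi.single γ 1)

/-- spatial Laplacian. -/
noncomputable def lap {d : ℕ} (f : ℝ × (Fin d → ℝ) → ℝ) (p : ℝ × (Fin d → ℝ)) : ℝ :=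
  ∑ γ, px γ (px γ f) p

/-- Kronecker delta. -/
def kron {n : ℕ} (α β : Fin n) : ℝ := if α = β then 1 else 0

/-- embedding of `Fin d` into `Fin 3` (the inclusion when `d ≤ 3`). -/
def e3 {d : ℕ} (i : Fin d) : Fin 3 := ⟨i.val % 3, Nat.mod_lt _ (by norm_num)⟩

/-- vorticity tensor `Ω_{αβ} = (1/2)(∂_β u_α − ∂_α u_β)`, extended by zero to a 3×3 matrix. -/
noncomputable def vort3 {d : ℕ} (u : ℝ × (Fin d → ℝ) → Fin d → ℝ) (p : ℝ × (Fin d → ℝ))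
    (α β : Fin 3) : ℝ :=
  if hα : (α : ℕ) < d then
    if hβ : (β : ℕ) < d then
      (1 / 2) * (px ⟨β, hβ⟩ (fun q => u q ⟨α, hα⟩) p - px ⟨α, hα⟩ (fun q => u q ⟨β, hβ⟩) p)
    else 0
  else 0

/-- `tr(Q²)`. -/
noncomputable def trQ2 {d : ℕ} (Q : ℝ × (Fin d → ℝ) → Fin 3 → Fin 3 → ℝ)
    (p : ℝ × (Fin d → ℝ)) : ℝ :=
  ∑ α, ∑ β, Q p α β * Q p β α

/-- `tr(Q³)`. -/
noncomputable def trQ3 {d : ℕ} (Q : ℝ × (Fin d → ℝ) → Fin 3 → Fin 3 → ℝ)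
    (p : ℝ × (Fin d → ℝ)) : ℝ :=
  ∑ α, ∑ β, ∑ γ, Q p α β * Q p β γ * Q p γ α

/-- `|∇Q|² = Σ_{α,β,γ} (∂_γ Q_{αβ})²`. -/
noncomputable def gradQsq {d : ℕ} (Q : ℝ × (Fin d → ℝ) → Fin 3 → Fin 3 → ℝ)
    (p : ℝ × (Fin d → ℝ)) : ℝ :=
  ∑ γ : Fin d, ∑ α : Fin 3, ∑ β : Fin 3, (px γ (fun q => Q q α β) p) ^ 2

/-- the molecular field `H = LΔQ − aQ + b(Q² − (tr(Q²)/3)Id) − c·tr(Q²)·Q`. -/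
noncomputable def molH {d : ℕ} (L a b c : ℝ) (Q : ℝ × (Fin d → ℝ) → Fin 3 → Fin 3 → ℝ)
    (p : ℝ × (Fin d → ℝ)) (α β : Fin 3) : ℝ :=
  L * lap (fun q => Q q α β) p - a * Q p α β
    + b * ((∑ γ, Q p α γ * Q p γ β) - kron α β / 3 * trQ2 Q p)
    - c * Q p α β * trQ2 Q p

/-- the order-parameter equation of the Beris–Edwards system (with `ξ = 0`). -/
noncomputable def QTensorEq {d : ℕ} (L Γ a b c : ℝ)
    (Q : ℝ × (Fin d → ℝ) → Fin 3 → Fin 3 → ℝ) (u : ℝ × (Fin d → ℝ) → Fin d → ℝ)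
    (p : ℝ × (Fin d → ℝ)) : Prop :=
  ∀ α β : Fin 3,
    pt (fun q => Q q α β) p + (∑ γ : Fin d, u p γ * px γ (fun q => Q q α β) p)
      - (∑ γ : Fin 3, (vort3 u p α γ * Q p γ β - Q p α γ * vort3 u p γ β))
    = Γ * molH L a b c Q p α β

/-- the forced Navier–Stokes (momentum) equation of the Beris–Edwards system. -/
noncomputable def MomentumEq {d : ℕ} (L ν : ℝ)
    (Q : ℝ × (Fin d → ℝ) → Fin 3 → Fin 3 → ℝ) (u : ℝ × (Fin d → ℝ) → Fin d → ℝ)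
    (P : ℝ × (Fin d → ℝ) → ℝ) (p : ℝ × (Fin d → ℝ)) : Prop :=
  ∀ α : Fin d,
    pt (fun q => u q α) p + (∑ β : Fin d, u p β * px β (fun q => u q α) p)
    = ν * lap (fun q => u q α) p + px α P p
      - L * (∑ β : Fin d, px β (fun q =>
          (∑ ζ : Fin 3, ∑ δ : Fin 3,
            px α (fun r => Q r ζ δ) q * px β (fun r => Q r ζ δ) q)
          - kron α β / (d : ℝ) * gradQsq Q q) p)
      + L * (∑ β : Fin d, px β (fun q =>
          ∑ γ : Fin 3, (Q q (e3 α) γ * lap (fun r => Q r γ (e3 β)) q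
            - lap (fun r => Q r (e3 α) γ) q * Q q γ (e3 β))) p)

/-- incompressibility. -/
noncomputable def DivFree {d : ℕ} (u : ℝ × (Fin d → ℝ) → Fin d → ℝ)
    (p : ℝ × (Fin d → ℝ)) : Prop :=
  ∑ γ : Fin d, px γ (fun q => u q γ) p = 0

lemma fin3_sq_le (q : Fin 3 → Fin 3 → ℝ) (hs : ∀ α β, q α β = q β α) :
    ∑ α, ∑ β, (∑ γ, q α γ * q γ β) ^ 2 ≤ (∑ α, ∑ β, q α β * q β α) ^ 2 := by
  have h1 : ∀ α β, (∑ γ, q α γ * q γ β) ^ 2 ≤ (∑ γ, q α γ ^ 2) * (∑ γ, q β γ ^ 2) := by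
    intro α β
    have := Finset.sum_mul_sq_le_sq_mul_sq Finset.univ (fun γ => q α γ) (fun γ => q γ β)
    refine this.trans (le_of_eq ?_)
    congr 1
    exact Finset.sum_congr rfl fun γ _ => by rw [hs]
  calc _ ≤ ∑ α, ∑ β, (∑ γ, q α γ ^ 2) * (∑ γ, q β γ ^ 2) :=
        Finset.sum_le_sum fun α _ => Finset.sum_le_sum fun β _ => h1 α β
    _ = (∑ α, ∑ β, q α β ^ 2) ^ 2 := by
        rw [sq (∑ α, ∑ β, q α β ^ 2), Finset.sum_mul_sum]
    _ = _ := by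
        congr 1
        refine Finset.sum_congr rfl fun α _ => Finset.sum_congr rfl fun β _ => ?_
        rw [hs β α, sq]

lemma fin3_cubic (b c : ℝ) (hc : 0 < c) (q : Fin 3 → Fin 3 → ℝ) (hs : ∀ α β, q α β = q β α) :
    b * (∑ α, ∑ β, q α β * ∑ γ, q α γ * q γ β) - c * (∑ α, ∑ β, q α β * q β α) ^ 2
      ≤ b ^ 2 / (4 * c) * (∑ α, ∑ β, q α β * q β α) := by
  have h1 := fin3_sq_le q hs
  have h2 : b * (∑ α, ∑ β, q α β * ∑ γ, q α γ * q γ β) ≤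
      c * (∑ α, ∑ β, (∑ γ, q α γ * q γ β) ^ 2) +
      b ^ 2 / (4 * c) * (∑ α, ∑ β, q α β * q β α) := by
    simp only [Finset.mul_sum (s := (Finset.univ : Finset (Fin 3))) (a := b),
      Finset.mul_sum (s := (Finset.univ : Finset (Fin 3))) (a := c),
      Finset.mul_sum (s := (Finset.univ : Finset (Fin 3))) (a := b ^ 2 / (4 * c)),
      ← Finset.sum_add_distrib]
    refine Finset.sum_le_sum fun α _ => Finset.sum_le_sum fun β _ => ?_
    rw [hs β α]
    generalize hy : (∑ γ, q α γ * q γ β) = y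
    rw [← sub_nonneg]
    have : c * y ^ 2 + b ^ 2 / (4 * c) * (q α β * q α β) - b * (q α β * y)
      = (2 * c * y - b * q α β) ^ 2 / (4 * c) := by field_simp; ring
    rw [this]
    positivity
  nlinarith

lemma alg_key (q w D V l : Fin 3 → Fin 3 → ℝ) (a b c Γ L : ℝ) (hc : 0 < c) (hΓ : 0 < Γ)
    (hs : ∀ α β, q α β = q β α) (htr : ∑ α, q α α = 0)
    (h : ∀ α β, D α β + V α β - (∑ γ, (w α γ * q γ β - q α γ * w γ β)) =
      Γ * (L * l α β - a * q α β + b * ((∑ γ, q α γ * q γ β)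
        - kron α β / 3 * (∑ α, ∑ β, q α β * q β α)) - c * q α β * (∑ α, ∑ β, q α β * q β α))) :
    ∑ α, ∑ β, 2 * (q α β * D α β) ≤ - (∑ α, ∑ β, 2 * (q α β * V α β))
      + Γ * L * (∑ α, ∑ β, 2 * (q α β * l α β))
      + 2 * Γ * (|a| + b ^ 2 / (4 * c)) * (∑ α, ∑ β, q α β * q β α) := by
  have hcub := fin3_cubic b c hc q hs
  have hS0 : 0 ≤ ∑ α, ∑ β, q α β * q β α :=
    Finset.sum_nonneg fun α _ => Finset.sum_nonneg fun β _ => by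
      rw [hs β α]; exact mul_self_nonneg _
  have ha : -a * (∑ α, ∑ β, q α β * q β α) ≤ |a| * (∑ α, ∑ β, q α β * q β α) :=
    mul_le_mul_of_nonneg_right (neg_le_abs a) hS0
  have hSe : ∑ α, ∑ β, q α β * q α β = ∑ α, ∑ β, q α β * q β α :=
    Finset.sum_congr rfl fun α _ => Finset.sum_congr rfl fun β _ => by rw [hs β α]
  generalize hS : (∑ α, ∑ β, q α β * q β α) = S at *
  have hcom : ∑ α, ∑ β, q α β * (∑ γ, (w α γ * q γ β - q α γ * w γ β)) = 0 := by
    simp only [Fin.sum_univ_three]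
    rw [hs 1 0, hs 2 0, hs 2 1]
    ring
  have hk : ∑ α, ∑ β, q α β * kron α β = 0 := by
    rw [← htr]
    refine Finset.sum_congr rfl fun α _ => ?_
    simp [kron]
  have hD : ∀ α β, 2 * (q α β * D α β) = - (2 * (q α β * V α β))
      + 2 * (q α β * (∑ γ, (w α γ * q γ β - q α γ * w γ β)))
      + Γ * L * (2 * (q α β * l α β)) + 2 * Γ * (-a - c * S) * (q α β * q α β)
      + 2 * Γ * b * (q α β * ∑ γ, q α γ * q γ β) - 2 * Γ * b * S / 3 * (q α β * kron α β) := by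
    intro α β
    have := h α β
    have e : D α β = - V α β + (∑ γ, (w α γ * q γ β - q α γ * w γ β)) +
      Γ * (L * l α β - a * q α β + b * ((∑ γ, q α γ * q γ β)
        - kron α β / 3 * S) - c * q α β * S) := by linarith
    rw [e]; ring
  have hsum : ∑ α, ∑ β, 2 * (q α β * D α β) = - (∑ α, ∑ β, 2 * (q α β * V α β))
      + 2 * (∑ α, ∑ β, q α β * (∑ γ, (w α γ * q γ β - q α γ * w γ β)))
      + Γ * L * (∑ α, ∑ β, 2 * (q α β * l α β))
      + 2 * Γ * (-a - c * S) * (∑ α, ∑ β, q α β * q α β)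
      + 2 * Γ * b * (∑ α, ∑ β, q α β * ∑ γ, q α γ * q γ β)
      - 2 * Γ * b * S / 3 * (∑ α, ∑ β, q α β * kron α β) := by
    rw [Finset.sum_congr rfl fun α _ => Finset.sum_congr rfl fun β _ => hD α β]
    simp only [Finset.sum_add_distrib, Finset.sum_sub_distrib, Finset.sum_neg_distrib,
      ← Finset.mul_sum]
  rw [hsum, hcom, hk, hSe]
  nlinarith

lemma px_eq_zero {d : ℕ} (γ : Fin d) (f : ℝ × (Fin d → ℝ) → ℝ) (hf : Differentiable ℝ f)
    (t : ℝ) (x : Fin d → ℝ) :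
    px γ f (t, x) = fderiv ℝ (fun y => f (t, y)) x (Pi.single γ 1) := by
  have h1 : HasFDerivAt (fun y : Fin d → ℝ => (t, y))
      (ContinuousLinearMap.inr ℝ ℝ (Fin d → ℝ)) x := hasFDerivAt_prodMk_right t x
  have := (hf (t, x)).hasFDerivAt.comp x h1
  have h2 := this.fderiv
  simp only [Function.comp_def] at h2
  rw [h2]
  simp [px]

lemma pt_hasDerivAt {d : ℕ} (f : ℝ × (Fin d → ℝ) → ℝ) (hf : Differentiable ℝ f)
    (t : ℝ) (x : Fin d → ℝ) :
    HasDerivAt (fun s => f (s, x)) (pt f (t, x)) t := by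
  have h1 : HasDerivAt (fun s : ℝ => (s, x)) ((1 : ℝ), (0 : Fin d → ℝ)) t :=
    (hasDerivAt_id t).prodMk (hasDerivAt_const t x)
  exact (hf (t, x)).hasFDerivAt.comp_hasDerivAt t h1

lemma px_contDiff {d : ℕ} (γ : Fin d) (f : ℝ × (Fin d → ℝ) → ℝ)
    (hf : ContDiff ℝ (⊤ : ℕ∞) f) : ContDiff ℝ (⊤ : ℕ∞) (px γ f) :=
  (hf.fderiv_right (m := (⊤ : ℕ∞)) (by exact_mod_cast le_top)).clm_apply contDiff_const

lemma pt_contDiff {d : ℕ} (f : ℝ × (Fin d → ℝ) → ℝ)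
    (hf : ContDiff ℝ (⊤ : ℕ∞) f) : ContDiff ℝ (⊤ : ℕ∞) (pt f) :=
  (hf.fderiv_right (m := (⊤ : ℕ∞)) (by exact_mod_cast le_top)).clm_apply contDiff_const

/-- integral over a ball of a spatial derivative of a field supported in the ball vanishes -/
lemma int_px_zero {d : ℕ} (γ : Fin d) (f : ℝ × (Fin d → ℝ) → ℝ)
    (hf : ContDiff ℝ (⊤ : ℕ∞) f) (t R : ℝ) (hR : ∀ x, R ≤ ‖x‖ → f (t, x) = 0) :
    ∫ x in Metric.closedBall (0 : Fin d → ℝ) R, px γ f (t, x) = 0 := by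
  have hd : Differentiable ℝ f := hf.differentiable (by simp)
  have hg : ContDiff ℝ (⊤ : ℕ∞) (fun y : Fin d → ℝ => f (t, y)) :=
    hf.comp (contDiff_const.prodMk contDiff_id)
  have hsupp : HasCompactSupport (fun y : Fin d → ℝ => f (t, y)) := by
    refine HasCompactSupport.intro (isCompact_closedBall (0 : Fin d → ℝ) R) fun x hx => hR x ?_
    simp only [Metric.mem_closedBall, dist_zero_right, not_le] at hx
    exact hx.le
  have hcont : Continuous fun x : Fin d → ℝ =>
      fderiv ℝ (fun y : Fin d → ℝ => f (t, y)) x (Pi.single γ 1) :=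
    (hg.continuous_fderiv (by simp)).clm_apply continuous_const
  simp only [px_eq_zero γ f hd]
  rw [setIntegral_eq_integral_of_forall_compl_eq_zero]
  · have := integral_mul_fderiv_eq_neg_fderiv_mul_of_integrable
      (μ := (volume : Measure (Fin d → ℝ))) (𝕜 := ℝ) (f := fun _ => (1 : ℝ))
      (g := fun y : Fin d → ℝ => f (t, y)) (v := Pi.single γ 1) (by simp)
      (by simpa using hcont.integrable_of_hasCompactSupport (hsupp.fderiv_apply ℝ _))
      (by simpa using hg.continuous.integrable_of_hasCompactSupport hsupp)
      (fun x _ => by fun_prop) (fun x _ => hg.differentiable (by simp) x)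
    simpa using this
  · intro x hx
    have : (fun y : Fin d → ℝ => f (t, y)) =ᶠ[nhds x] fun _ => 0 := by
      filter_upwards [Metric.isClosed_closedBall.isOpen_compl.mem_nhds hx] with y hy
      simp only [Set.mem_compl_iff, Metric.mem_closedBall, dist_zero_right, not_le] at hy
      exact hR y hy.le
    rw [this.fderiv_eq]
    simp

/-- differentiation under the integral sign over a ball -/
lemma int_hasDerivAt {d : ℕ} (f : ℝ × (Fin d → ℝ) → ℝ)
    (hf : ContDiff ℝ (⊤ : ℕ∞) f) (t R : ℝ) :
    HasDerivAt (fun s => ∫ x in Metric.closedBall (0 : Fin d → ℝ) R, f (s, x))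
      (∫ x in Metric.closedBall (0 : Fin d → ℝ) R, pt f (t, x)) t := by
  have hd : Differentiable ℝ f := hf.differentiable (by simp)
  have hptc : Continuous (pt f) := (pt_contDiff f hf).continuous
  have hK : IsCompact (Metric.closedBall t 1 ×ˢ Metric.closedBall (0 : Fin d → ℝ) R) :=
    (isCompact_closedBall t 1).prod (isCompact_closedBall _ _)
  obtain ⟨M, hM⟩ := hK.exists_bound_of_continuousOn hptc.continuousOn
  have hfin : volume (Metric.closedBall (0 : Fin d → ℝ) R) < ⊤ :=
    (isCompact_closedBall _ _).measure_lt_top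
  have hfc : ∀ s, Continuous fun x : Fin d → ℝ => f (s, x) := fun s =>
    hf.continuous.comp (by fun_prop)
  refine (hasDerivAt_integral_of_dominated_loc_of_deriv_le
    (F := fun s x => f (s, x)) (F' := fun s x => pt f (s, x)) (bound := fun _ => M)
    (Metric.closedBall_mem_nhds t one_pos) ?_ ?_ ?_ ?_ ?_ ?_).2
  · exact Filter.Eventually.of_forall fun s => (hfc s).aestronglyMeasurable
  · exact (hfc t).continuousOn.integrableOn_compact (isCompact_closedBall _ _)
  · exact (hptc.comp (by fun_prop : Continuous fun x : Fin d → ℝ => (t, x))).aestronglyMeasurable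
  · refine (ae_restrict_iff' measurableSet_closedBall).2 (Filter.Eventually.of_forall ?_)
    intro x hx s hs
    exact hM (s, x) ⟨hs, hx⟩
  · exact integrableOn_const hfin.ne
  · exact Filter.Eventually.of_forall fun x s _ => pt_hasDerivAt f hd s x

lemma dd_mul {d : ℕ} {f g : ℝ × (Fin d → ℝ) → ℝ} (q v : ℝ × (Fin d → ℝ))
    (hf : Differentiable ℝ f) (hg : Differentiable ℝ g) :
    fderiv ℝ (fun r => f r * g r) q v = fderiv ℝ f q v * g q + f q * fderiv ℝ g q v := by
  rw [fderiv_fun_mul (hf q) (hg q)]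
  simp
  ring

lemma dd_pow {d : ℕ} {f : ℝ × (Fin d → ℝ) → ℝ} (q v : ℝ × (Fin d → ℝ)) (n : ℕ)
    (hf : Differentiable ℝ f) :
    fderiv ℝ (fun r => f r ^ n) q v = n * f q ^ (n - 1) * fderiv ℝ f q v := by
  have := ((hf q).hasFDerivAt.pow n).fderiv
  rw [this]
  simp

lemma dd_sq {d : ℕ} {f : Fin 3 → Fin 3 → ℝ × (Fin d → ℝ) → ℝ} (q v : ℝ × (Fin d → ℝ))
    (hf : ∀ α β, Differentiable ℝ (f α β)) :
    fderiv ℝ (fun r => ∑ α, ∑ β, f α β r * f α β r) q v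
      = ∑ α, ∑ β, 2 * (f α β q * fderiv ℝ (f α β) q v) := by
  have hd : ∀ α β, Differentiable ℝ (fun r => f α β r * f α β r) :=
    fun α β => (hf α β).mul (hf α β)
  rw [fderiv_fun_sum (fun α _ => (Differentiable.fun_sum (fun β _ => hd α β)) q),
    _root_.sum_apply]
  refine Finset.sum_congr rfl fun α _ => ?_
  rw [fderiv_fun_sum (fun β _ => hd α β q), _root_.sum_apply]
  refine Finset.sum_congr rfl fun β _ => ?_
  rw [dd_mul q v (hf α β) (hf α β)]
  ring

lemma dd_sq2 {d : ℕ} {f g : Fin 3 → Fin 3 → ℝ × (Fin d → ℝ) → ℝ} (q v : ℝ × (Fin d → ℝ))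
    (hf : ∀ α β, Differentiable ℝ (f α β)) (hg : ∀ α β, Differentiable ℝ (g α β)) :
    fderiv ℝ (fun r => ∑ α, ∑ β, 2 * (f α β r * g α β r)) q v
      = ∑ α, ∑ β, 2 * (fderiv ℝ (f α β) q v * g α β q + f α β q * fderiv ℝ (g α β) q v) := by
  have hd : ∀ α β, Differentiable ℝ (fun r => 2 * (f α β r * g α β r)) :=
    fun α β => ((hf α β).mul (hg α β)).const_mul 2
  rw [fderiv_fun_sum (fun α _ => (Differentiable.fun_sum (fun β _ => hd α β)) q),
    _root_.sum_apply]
  refine Finset.sum_congr rfl fun α _ => ?_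
  rw [fderiv_fun_sum (fun β _ => hd α β q), _root_.sum_apply]
  refine Finset.sum_congr rfl fun β _ => ?_
  rw [fderiv_const_mul (((hf α β).fun_mul (hg α β)) q), _root_.smul_apply,
    dd_mul q v (hf α β) (hg α β), smul_eq_mul]

/-- the flux -/
noncomputable def flux {d : ℕ} (K : ℝ) (p : ℕ) (φ : ℝ × (Fin d → ℝ) → ℝ)
    (u : ℝ × (Fin d → ℝ) → Fin d → ℝ) (γ : Fin d) (r : ℝ × (Fin d → ℝ)) : ℝ :=
  K * (φ r ^ (p - 1) * px γ φ r) - u r γ * φ r ^ p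

lemma px_flux {d : ℕ} (K : ℝ) (p : ℕ) (φ : ℝ × (Fin d → ℝ) → ℝ)
    (u : ℝ × (Fin d → ℝ) → Fin d → ℝ) (γ : Fin d) (r : ℝ × (Fin d → ℝ))
    (hφ : ContDiff ℝ (⊤ : ℕ∞) φ) (hu : ContDiff ℝ (⊤ : ℕ∞) u) :
    px γ (flux K p φ u γ) r =
      K * (((p - 1 : ℕ) : ℝ) * φ r ^ (p - 1 - 1) * px γ φ r * px γ φ r
        + φ r ^ (p - 1) * px γ (px γ φ) r)
      - (px γ (fun q => u q γ) r * φ r ^ p + u r γ * (p * φ r ^ (p - 1) * px γ φ r)) := by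
  have hφd : Differentiable ℝ φ := hφ.differentiable (by simp)
  have hpd : Differentiable ℝ (px γ φ) := (px_contDiff γ φ hφ).differentiable (by simp)
  have hud : Differentiable ℝ (fun q => u q γ) :=
    (contDiff_pi.1 hu γ).differentiable (by simp)
  have h1 : Differentiable ℝ (fun r => φ r ^ (p - 1) * px γ φ r) := (hφd.pow _).mul hpd
  have h2 : Differentiable ℝ (fun r => u r γ * φ r ^ p) := hud.mul (hφd.pow _)
  unfold flux
  rw [px, fderiv_fun_sub ((h1.const_mul K) r) (h2 r), _root_.sub_apply,
    fderiv_const_mul (h1 r), _root_.smul_apply, smul_eq_mul,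
    dd_mul r _ (hφd.fun_pow _) hpd, dd_mul r _ hud (hφd.fun_pow _),
    dd_pow r _ _ hφd, dd_pow r _ _ hφd]
  rfl

lemma pointwise_ineq {d : ℕ} (a b c Γ L : ℝ) (hc : 0 < c) (hΓ : 0 < Γ) (hL : 0 < L) (p : ℕ)
    (hp : 1 ≤ p)
    (Q : ℝ × (Fin d → ℝ) → Fin 3 → Fin 3 → ℝ) (u : ℝ × (Fin d → ℝ) → Fin d → ℝ)
    (hQ : ContDiff ℝ (⊤ : ℕ∞) Q) (hu : ContDiff ℝ (⊤ : ℕ∞) u)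
    (hs : ∀ q α β, Q q α β = Q q β α) (htr : ∀ q, ∑ α, Q q α α = 0)
    (r : ℝ × (Fin d → ℝ)) (hE : QTensorEq L Γ a b c Q u r) (hD : DivFree u r) :
    pt (fun q => trQ2 Q q ^ p) r ≤ 2 * p * Γ * (|a| + b ^ 2 / (4 * c)) * trQ2 Q r ^ p
      + ∑ γ, px γ (flux (Γ * L * p) p (trQ2 Q) u γ) r := by
  have hf : ∀ α β, ContDiff ℝ (⊤ : ℕ∞) (fun q => Q q α β) := fun α β =>
    contDiff_pi.1 (contDiff_pi.1 hQ α) β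
  have hfd : ∀ α β, Differentiable ℝ (fun q => Q q α β) := fun α β =>
    (hf α β).differentiable (by simp)
  have hφe : trQ2 Q = fun q => ∑ α, ∑ β, Q q α β * Q q α β := by
    funext q
    exact Finset.sum_congr rfl fun α _ => Finset.sum_congr rfl fun β _ => by rw [hs q β α]
  have hφ : ContDiff ℝ (⊤ : ℕ∞) (trQ2 Q) := by
    rw [hφe]
    exact ContDiff.sum fun α _ => ContDiff.sum fun β _ => (hf α β).mul (hf α β)
  have hφd : Differentiable ℝ (trQ2 Q) := hφ.differentiable (by simp)
  have hφ0 : 0 ≤ trQ2 Q r := by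
    rw [hφe]
    exact Finset.sum_nonneg fun α _ => Finset.sum_nonneg fun β _ => mul_self_nonneg _
  have hpt : pt (trQ2 Q) r = ∑ α, ∑ β, 2 * (Q r α β * pt (fun q => Q q α β) r) := by
    rw [hφe]; exact dd_sq r _ hfd
  have hpx : ∀ γ, px γ (trQ2 Q) = fun r => ∑ α, ∑ β, 2 * (Q r α β * px γ (fun q => Q q α β) r) := by
    intro γ; funext r
    rw [hφe]; exact dd_sq r _ hfd
  have hpxx : ∀ γ, px γ (px γ (trQ2 Q)) r = ∑ α, ∑ β, 2 * (px γ (fun q => Q q α β) r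
      * px γ (fun q => Q q α β) r + Q r α β * px γ (px γ (fun q => Q q α β)) r) := by
    intro γ
    rw [hpx]
    exact dd_sq2 r _ hfd (fun α β => (px_contDiff γ _ (hf α β)).differentiable (by simp))
  have hlap : ∑ α, ∑ β, 2 * (Q r α β * lap (fun q => Q q α β) r)
      ≤ ∑ γ, px γ (px γ (trQ2 Q)) r := by
    have e : ∑ α, ∑ β, 2 * (Q r α β * lap (fun q => Q q α β) r)
        = ∑ γ, ∑ α, ∑ β, 2 * (Q r α β * px γ (px γ (fun q => Q q α β)) r) := by
      symm
      refine Finset.sum_comm.trans (Finset.sum_congr rfl fun α _ => ?_)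
      refine Finset.sum_comm.trans (Finset.sum_congr rfl fun β _ => ?_)
      simp only [lap, Finset.mul_sum]
    rw [e]
    refine Finset.sum_le_sum fun γ _ => ?_
    rw [hpxx]
    refine Finset.sum_le_sum fun α _ => Finset.sum_le_sum fun β _ => ?_
    nlinarith [mul_self_nonneg (px γ (fun q => Q q α β) r)]
  have hadv : ∑ α, ∑ β, 2 * (Q r α β * ∑ γ, u r γ * px γ (fun q => Q q α β) r)
      = ∑ γ, u r γ * px γ (trQ2 Q) r := by
    simp only [hpx, Finset.mul_sum]
    symm
    refine Finset.sum_comm.trans (Finset.sum_congr rfl fun α _ => ?_)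
    refine Finset.sum_comm.trans (Finset.sum_congr rfl fun β _ => ?_)
    exact Finset.sum_congr rfl fun γ _ => by ring
  have key := alg_key (Q r) (vort3 u r) (fun α β => pt (fun q => Q q α β) r)
    (fun α β => ∑ γ, u r γ * px γ (fun q => Q q α β) r)
    (fun α β => lap (fun q => Q q α β) r) a b c Γ L hc hΓ (hs r) (htr r)
    (fun α β => hE α β)
  rw [hadv, ← hpt] at key
  change _ ≤ _ + _ * trQ2 Q r at key
  have key2 : pt (trQ2 Q) r ≤ -(∑ γ, u r γ * px γ (trQ2 Q) r)
      + Γ * L * (∑ γ, px γ (px γ (trQ2 Q)) r)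
      + 2 * Γ * (|a| + b ^ 2 / (4 * c)) * trQ2 Q r := by
    have := mul_le_mul_of_nonneg_left hlap (mul_pos hΓ hL).le
    linarith
  have hflux : (Γ * L * p) * (trQ2 Q r ^ (p - 1) * ∑ γ, px γ (px γ (trQ2 Q)) r)
      - p * trQ2 Q r ^ (p - 1) * (∑ γ, u r γ * px γ (trQ2 Q) r)
      ≤ ∑ γ, px γ (flux (Γ * L * p) p (trQ2 Q) u γ) r := by
    have hz : (∑ γ, px γ (fun q => u q γ) r) * trQ2 Q r ^ p = 0 := by
      rw [show (∑ γ, px γ (fun q => u q γ) r) = 0 from hD, zero_mul]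
    rw [← sub_zero (_ - _), ← hz]
    simp only [Finset.mul_sum, Finset.sum_mul, ← Finset.sum_sub_distrib]
    refine Finset.sum_le_sum fun γ _ => ?_
    rw [px_flux _ _ _ _ _ _ hφ hu]
    have h0 : 0 ≤ (Γ * L * p) * (((p - 1 : ℕ) : ℝ) * trQ2 Q r ^ (p - 1 - 1)
        * (px γ (trQ2 Q) r * px γ (trQ2 Q) r)) := by
      have := mul_self_nonneg (px γ (trQ2 Q) r)
      positivity
    linarith
  have hpow : trQ2 Q r ^ p = trQ2 Q r ^ (p - 1) * trQ2 Q r := by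
    rw [← pow_succ, Nat.sub_add_cancel hp]
  have hptp : pt (fun q => trQ2 Q q ^ p) r = p * trQ2 Q r ^ (p - 1) * pt (trQ2 Q) r :=
    dd_pow r _ _ hφd
  rw [hptp]
  have h3 := mul_le_mul_of_nonneg_left key2
    (by positivity : (0 : ℝ) ≤ p * trQ2 Q r ^ (p - 1))
  rw [hpow]
  linarith

lemma main_ineq {d : ℕ} (a b c Γ L : ℝ) (hc : 0 < c) (hΓ : 0 < Γ) (hL : 0 < L) (p : ℕ)
    (hp : 1 ≤ p)
    (Q : ℝ × (Fin d → ℝ) → Fin 3 → Fin 3 → ℝ) (u : ℝ × (Fin d → ℝ) → Fin d → ℝ)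
    (hQ : ContDiff ℝ (⊤ : ℕ∞) Q) (hu : ContDiff ℝ (⊤ : ℕ∞) u)
    (hs : ∀ q α β, Q q α β = Q q β α) (htr : ∀ q, ∑ α, Q q α α = 0)
    (t₀ R : ℝ) (ht₀ : 0 ≤ t₀)
    (hR : ∀ t x, 0 ≤ t → t ≤ t₀ → R ≤ ‖x‖ → Q (t, x) = 0)
    (hE : ∀ t x, 0 ≤ t → t ≤ t₀ → QTensorEq L Γ a b c Q u (t, x) ∧ DivFree u (t, x)) :
    (∫ x : Fin d → ℝ, (trQ2 Q (t₀, x)) ^ p)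
      ≤ Real.exp (2 * p * Γ * (|a| + b ^ 2 / (4 * c)) * t₀)
        * ∫ x : Fin d → ℝ, (trQ2 Q (0, x)) ^ p := by
  set C := 2 * p * Γ * (|a| + b ^ 2 / (4 * c)) with hC
  have hf : ∀ α β, ContDiff ℝ (⊤ : ℕ∞) (fun q => Q q α β) := fun α β =>
    contDiff_pi.1 (contDiff_pi.1 hQ α) β
  have hφ : ContDiff ℝ (⊤ : ℕ∞) (trQ2 Q) :=
    ContDiff.sum fun α _ => ContDiff.sum fun β _ => (hf α β).mul (hf β α)
  have hφp : ContDiff ℝ (⊤ : ℕ∞) (fun q => trQ2 Q q ^ p) := hφ.pow p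
  have hφz : ∀ t x, 0 ≤ t → t ≤ t₀ → R ≤ ‖x‖ → trQ2 Q (t, x) = 0 := by
    intro t x h1 h2 h3
    simp [trQ2, hR t x h1 h2 h3]
  have hfl : ∀ γ, ContDiff ℝ (⊤ : ℕ∞) (flux (Γ * L * p) p (trQ2 Q) u γ) := fun γ =>
    (contDiff_const.mul ((hφ.pow _).mul (px_contDiff γ _ hφ))).sub
      ((contDiff_pi.1 hu γ).mul (hφ.pow _))
  have hpxz : ∀ γ t x, 0 ≤ t → t ≤ t₀ → R ≤ ‖x‖ → px γ (trQ2 Q) (t, x) = 0 := by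
    intro γ t x h1 h2 h3
    have hfd : ∀ α β, Differentiable ℝ (fun q => Q q α β) := fun α β =>
      (hf α β).differentiable (by simp)
    have hφe : trQ2 Q = fun q => ∑ α, ∑ β, Q q α β * Q q α β := by
      funext q
      exact Finset.sum_congr rfl fun α _ => Finset.sum_congr rfl fun β _ => by rw [hs q β α]
    rw [hφe, px, dd_sq _ _ hfd]
    simp [hR t x h1 h2 h3]
  have hflz : ∀ γ t x, 0 ≤ t → t ≤ t₀ → R ≤ ‖x‖ →
      flux (Γ * L * p) p (trQ2 Q) u γ (t, x) = 0 := by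
    intro γ t x h1 h2 h3
    have hp0 : p ≠ 0 := by omega
    simp [flux, hφz t x h1 h2 h3, hpxz γ t x h1 h2 h3, hp0]
  set B := Metric.closedBall (0 : Fin d → ℝ) R with hB
  have hBc : IsCompact B := isCompact_closedBall _ _
  set F : ℝ → ℝ := fun s => ∫ x in B, trQ2 Q (s, x) ^ p with hF
  have hFd : ∀ t, HasDerivAt F (∫ x in B, pt (fun q => trQ2 Q q ^ p) (t, x)) t := fun t =>
    int_hasDerivAt (fun q => trQ2 Q q ^ p) hφp t R
  have hFe : ∀ t, 0 ≤ t → t ≤ t₀ → ∫ x : Fin d → ℝ, (trQ2 Q (t, x)) ^ p = F t := by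
    intro t h1 h2
    refine (setIntegral_eq_integral_of_forall_compl_eq_zero fun x hx => ?_).symm
    simp only [hB, Metric.mem_closedBall, dist_zero_right, not_le] at hx
    rw [hφz t x h1 h2 hx.le]
    exact zero_pow (by omega)
  have hint : ∀ (t : ℝ) (g : ℝ × (Fin d → ℝ) → ℝ), Continuous g →
      IntegrableOn (fun x => g (t, x)) B := fun t g hg =>
    (hg.comp (by fun_prop : Continuous fun x : Fin d → ℝ => (t, x))).continuousOn.integrableOn_compact
      hBc
  have hder : ∀ t, 0 ≤ t → t ≤ t₀ →
      (∫ x in B, pt (fun q => trQ2 Q q ^ p) (t, x)) ≤ C * F t := by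
    intro t h1 h2
    have hi2 : ∀ γ ∈ (Finset.univ : Finset (Fin d)),
        IntegrableOn (fun x => px γ (flux (Γ * L * p) p (trQ2 Q) u γ) (t, x)) B :=
      fun γ _ => hint t _ (px_contDiff γ _ (hfl γ)).continuous
    have hi1 : IntegrableOn (fun x => C * trQ2 Q (t, x) ^ p) B :=
      (hint t _ hφp.continuous).const_mul C
    have hi3 : IntegrableOn (fun x => ∑ γ, px γ (flux (Γ * L * p) p (trQ2 Q) u γ) (t, x)) B :=
      integrable_finsetSum _ hi2
    calc _ ≤ ∫ x in B, (C * trQ2 Q (t, x) ^ p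
          + ∑ γ, px γ (flux (Γ * L * p) p (trQ2 Q) u γ) (t, x)) := by
          refine setIntegral_mono_on (hint t _ (pt_contDiff _ hφp).continuous) (hi1.add hi3)
            measurableSet_closedBall fun x _ => ?_
          exact pointwise_ineq a b c Γ L hc hΓ hL p hp Q u hQ hu hs htr (t, x)
            (hE t x h1 h2).1 (hE t x h1 h2).2
      _ = C * F t := by
          rw [integral_add hi1 hi3, integral_finsetSum _ hi2, integral_const_mul]
          rw [Finset.sum_eq_zero, add_zero]
          intro γ _
          exact int_px_zero γ _ (hfl γ) t R fun x hx => hflz γ t x h1 h2 hx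
  have hGd : ∀ t, HasDerivAt (fun t => Real.exp (-C * t) * F t)
      (Real.exp (-C * t) * (-C) * F t
        + Real.exp (-C * t) * (∫ x in B, pt (fun q => trQ2 Q q ^ p) (t, x))) t := by
    intro t
    have h1 : HasDerivAt (fun t : ℝ => -C * t) (-C) t := by
      simpa using (hasDerivAt_id t).const_mul (-C)
    exact h1.exp.mul (hFd t)
  have hanti : AntitoneOn (fun t => Real.exp (-C * t) * F t) (Set.Icc 0 t₀) := by
    refine antitoneOn_of_deriv_nonpos (convex_Icc _ _)
      (fun t _ => (hGd t).continuousAt.continuousWithinAt)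
      (fun t _ => (hGd t).differentiableAt.differentiableWithinAt) fun t ht => ?_
    rw [interior_Icc] at ht
    rw [(hGd t).deriv]
    have := mul_le_mul_of_nonneg_left (hder t ht.1.le ht.2.le) (Real.exp_pos (-C * t)).le
    linarith
  have hfin := hanti (Set.left_mem_Icc.2 ht₀) (Set.right_mem_Icc.2 ht₀) ht₀
  simp only [mul_zero, Real.exp_zero, one_mul] at hfin
  rw [hFe t₀ ht₀ le_rfl, hFe 0 le_rfl ht₀]
  have := mul_le_mul_of_nonneg_left hfin (Real.exp_pos (C * t₀)).le
  rwa [← mul_assoc, ← Real.exp_add, neg_mul, add_neg_cancel, Real.exp_zero, one_mul] at this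

/-- Along smooth, uniformly compactly supported solutions of the Beris–Edwards system on
`[0,T) × ℝ^d` (`d ∈ {2,3}`, `c > 0`), there is a constant `C = C(a,b,c,p,Γ)` such that
`∫ (tr Q²(t))^p ≤ e^{Ct} ∫ (tr Q²(0))^p`; in particular
`‖Q(t,·)‖_{L^{2p}} ≤ e^{Ct/(2p)}‖Q(0,·)‖_{L^{2p}}`. -/
theorem Lp_growth_estimate
    (a b c Γ : ℝ) (hc : 0 < c) (hΓ : 0 < Γ) (p : ℕ) (hp : 1 ≤ p) :
    ∃ C : ℝ, ∀ (d : ℕ), d = 2 ∨ d = 3 → ∀ (T : ℝ≥0∞), 0 < T →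
      ∀ (L ν : ℝ), 0 < L → 0 < ν →
      ∀ (Q : ℝ × (Fin d → ℝ) → Fin 3 → Fin 3 → ℝ)
        (u : ℝ × (Fin d → ℝ) → Fin d → ℝ)
        (P : ℝ × (Fin d → ℝ) → ℝ),
      ContDiff ℝ (⊤ : ℕ∞) Q → ContDiff ℝ (⊤ : ℕ∞) u → ContDiff ℝ (⊤ : ℕ∞) P →
      (∀ q α β, Q q α β = Q q β α) → (∀ q, ∑ α, Q q α α = 0) →
      (∀ t₀ : ℝ, 0 ≤ t₀ → ENNReal.ofReal t₀ < T →
        ∃ R : ℝ, ∀ t : ℝ, ∀ x : Fin d → ℝ, 0 ≤ t → t ≤ t₀ → R ≤ ‖x‖ →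
          Q (t, x) = 0 ∧ u (t, x) = 0 ∧ P (t, x) = 0) →
      (∀ t : ℝ, ∀ x : Fin d → ℝ, 0 ≤ t → ENNReal.ofReal t < T →
        QTensorEq L Γ a b c Q u (t, x) ∧ MomentumEq L ν Q u P (t, x) ∧ DivFree u (t, x)) →
      ∀ t : ℝ, 0 ≤ t → ENNReal.ofReal t < T →
        (∫ x : Fin d → ℝ, (trQ2 Q (t, x)) ^ p)
          ≤ Real.exp (C * t) * ∫ x : Fin d → ℝ, (trQ2 Q (0, x)) ^ p
        ∧ (∫ x : Fin d → ℝ, (trQ2 Q (t, x)) ^ p) ^ ((1 : ℝ) / (2 * p))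
          ≤ Real.exp (C * t / (2 * p)) *
              (∫ x : Fin d → ℝ, (trQ2 Q (0, x)) ^ p) ^ ((1 : ℝ) / (2 * p)) := by
  refine ⟨2 * p * Γ * (|a| + b ^ 2 / (4 * c)), ?_⟩
  intro d _ T _ L ν hL _ Q u P hQ hu _ hs htr hsupp hE t ht htT
  obtain ⟨R, hR⟩ := hsupp t ht htT
  have h1 := main_ineq a b c Γ L hc hΓ hL p hp Q u hQ hu hs htr t R ht
    (fun s x h1 h2 h3 => (hR s x h1 h2 h3).1)
    (fun s x h1 h2 =>
      have h := hE s x h1 ((ENNReal.ofReal_le_ofReal h2).trans_lt htT)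
      ⟨h.1, h.2.2⟩)
  refine ⟨h1, ?_⟩
  have hn : ∀ s, 0 ≤ ∫ x : Fin d → ℝ, (trQ2 Q (s, x)) ^ p := fun s =>
    integral_nonneg fun x => pow_nonneg (Finset.sum_nonneg fun α _ =>
      Finset.sum_nonneg fun β _ => by rw [hs (s, x) β α]; exact mul_self_nonneg _) p
  have h2 := Real.rpow_le_rpow (hn t) h1 (by positivity : (0 : ℝ) ≤ 1 / (2 * p))
  rw [Real.mul_rpow (Real.exp_pos _).le (hn 0), ← Real.exp_mul, mul_one_div] at h2
  exact h2
end

section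
/- Let d ∈ {2,3}, T ∈ (0,∞], L > 0, Γ > 0, ν > 0, a, b ∈ ℝ and c > 0. Let Q : [0,T)×ℝ^d → S₀, u : [0,T)×ℝ^d → ℝ^d and P : [0,T)×ℝ^d → ℝ be smooth, with x ↦ Q(t,x), x ↦ u(t,x), x ↦ P(t,x) compactly supported uniformly on compact subintervals of [0,T), satisfying the coupled system pointwise. Then there exists a constant C, depending only on a, b, c, d, L and Γ, such that for all t ∈ [0,T): ‖u(t,·)‖²_{L²} + 2ν∫₀ᵗ‖∇u(s,·)‖²_{L²} ds + L‖∇Q(t,·)‖²_{L²} + ΓL²∫₀ᵗ‖ΔQ(s,·)‖²_{L²} ds ≤ ‖u(0,·)‖²_{L²} + L‖∇Q(0,·)‖²_{L²} + C e^{Ct}( ‖Q(0,·)‖²_{L²} + ‖Q(0,·)‖⁶_{L⁶} ). -/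
open MeasureTheory ENNReal

/-! ### calculus infrastructure -/

abbrev Sm {d : ℕ} (f : ℝ × (Fin d → ℝ) → ℝ) : Prop := ContDiff ℝ (⊤ : ℕ∞) f

structure Good {d : ℕ} (t R : ℝ) (f : ℝ × (Fin d → ℝ) → ℝ) : Prop where
  sm : Sm f
  vanish : ∀ s x, 0 ≤ s → s ≤ t → R < ‖x‖ → f (s, x) = 0

def Null {d : ℕ} (t : ℝ) (f : ℝ × (Fin d → ℝ) → ℝ) : Prop :=
  ∀ s, 0 ≤ s → s ≤ t → Integrable (fun x => f (s, x)) ∧ ∫ x, f (s, x) = 0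

section infra
variable {d : ℕ} {t R : ℝ} {f g : ℝ × (Fin d → ℝ) → ℝ}

theorem Sm.diff (hf : Sm f) : Differentiable ℝ f := hf.differentiable (by simp)

theorem Sm.dir (hf : Sm f) (v : ℝ × (Fin d → ℝ)) : Sm (fun p => fderiv ℝ f p v) :=
  (hf.fderiv_right (m := (⊤ : ℕ∞)) (by simp)).clm_apply contDiff_const

theorem Sm.px (hf : Sm f) (γ : Fin d) : Sm (px γ f) := hf.dir _
theorem Sm.pt (hf : Sm f) : Sm (pt f) := hf.dir _
theorem Sm.lap (hf : Sm f) : Sm (lap f) := by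
  unfold _root_.lap
  exact ContDiff.sum fun γ _ => (hf.px γ).px γ
theorem Sm.mul' (hf : Sm f) (hg : Sm g) : Sm (fun p => f p * g p) := ContDiff.mul hf hg
theorem Sm.add' (hf : Sm f) (hg : Sm g) : Sm (fun p => f p + g p) := ContDiff.add hf hg
theorem Sm.sub' (hf : Sm f) (hg : Sm g) : Sm (fun p => f p - g p) := ContDiff.sub hf hg
theorem Sm.const (k : ℝ) : Sm (fun _ : ℝ × (Fin d → ℝ) => k) := contDiff_const
theorem Sm.sum {ι : Type*} [Fintype ι] {F : ι → ℝ × (Fin d → ℝ) → ℝ} (h : ∀ i, Sm (F i)) :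
    Sm (fun p => ∑ i, F i p) := ContDiff.sum fun i _ => h i

theorem dir_comm (hf : Sm f) (v w p : ℝ × (Fin d → ℝ)) :
    fderiv ℝ (fun q => fderiv ℝ f q v) p w = fderiv ℝ (fun q => fderiv ℝ f q w) p v := by
  have h1 : DifferentiableAt ℝ (fderiv ℝ f) p :=
    ((hf.fderiv_right (m := (⊤ : ℕ∞)) (by simp)).differentiable (by simp)) p
  have hs : IsSymmSndFDerivAt ℝ f p := hf.contDiffAt.isSymmSndFDerivAt (by
    simp only [minSmoothness_of_isRCLikeNormedField]; exact (WithTop.coe_le_coe.2 le_top : ((2 : ℕ∞) : WithTop ℕ∞) ≤ ((⊤ : ℕ∞) : WithTop ℕ∞)))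
  rw [fderiv_clm_apply h1 (by fun_prop), fderiv_clm_apply h1 (by fun_prop)]
  simpa using hs w v

theorem px_comm (hf : Sm f) (α β : Fin d) (p) : px α (px β f) p = px β (px α f) p :=
  dir_comm hf _ _ p
theorem pt_px (hf : Sm f) (α : Fin d) (p) : pt (px α f) p = px α (pt f) p :=
  dir_comm hf _ _ p

theorem px_mul (hf : Sm f) (hg : Sm g) (γ : Fin d) (p) :
    px γ (fun q => f q * g q) p = px γ f p * g p + f p * px γ g p := by
  unfold px
  rw [fderiv_fun_mul (hf.diff p) (hg.diff p)]
  simp; ring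
theorem pt_mul (hf : Sm f) (hg : Sm g) (p) :
    pt (fun q => f q * g q) p = pt f p * g p + f p * pt g p := by
  unfold pt
  rw [fderiv_fun_mul (hf.diff p) (hg.diff p)]
  simp; ring
theorem px_sum {ι : Type*} [Fintype ι] {F : ι → ℝ × (Fin d → ℝ) → ℝ} (h : ∀ i, Sm (F i))
    (γ : Fin d) (p) : px γ (fun q => ∑ i, F i q) p = ∑ i, px γ (F i) p := by
  unfold px
  rw [fderiv_fun_sum fun i _ => (h i).diff p]
  simp
theorem pt_sum {ι : Type*} [Fintype ι] {F : ι → ℝ × (Fin d → ℝ) → ℝ} (h : ∀ i, Sm (F i))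
    (p) : pt (fun q => ∑ i, F i q) p = ∑ i, pt (F i) p := by
  unfold pt
  rw [fderiv_fun_sum fun i _ => (h i).diff p]
  simp
theorem px_add (hf : Sm f) (hg : Sm g) (γ : Fin d) (p) :
    px γ (fun q => f q + g q) p = px γ f p + px γ g p := by
  unfold px
  rw [fderiv_fun_add (hf.diff p) (hg.diff p)]; simp
theorem pt_add (hf : Sm f) (hg : Sm g) (p) :
    pt (fun q => f q + g q) p = pt f p + pt g p := by
  unfold pt
  rw [fderiv_fun_add (hf.diff p) (hg.diff p)]; simp
theorem px_const (k : ℝ) (γ : Fin d) (p) : px γ (fun _ => k) p = 0 := by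
  unfold px; simp
theorem pt_const (k : ℝ) (p : ℝ × (Fin d → ℝ)) : pt (fun _ => k) p = 0 := by
  unfold pt; simp

theorem slice_hasFDerivAt (hf : Sm f) (s : ℝ) (x : Fin d → ℝ) :
    HasFDerivAt (fun y => f (s, y)) ((fderiv ℝ f (s, x)).comp (ContinuousLinearMap.inr ℝ ℝ _)) x :=
  (hf.diff (s, x)).hasFDerivAt.comp x (hasFDerivAt_prodMk_right s x)

theorem slice_px (hf : Sm f) (s : ℝ) (x : Fin d → ℝ) (γ : Fin d) :
    px γ f (s, x) = fderiv ℝ (fun y => f (s, y)) x (Pi.single γ 1) := by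
  rw [(slice_hasFDerivAt hf s x).fderiv]; rfl

theorem slice_pt (hf : Sm f) (s : ℝ) (x : Fin d → ℝ) :
    HasDerivAt (fun r => f (r, x)) (pt f (s, x)) s := by
  have := ((hf.diff (s, x)).hasFDerivAt.comp s (hasFDerivAt_prodMk_left s x)).hasDerivAt
  exact this

theorem Good.px (hf : Good t R f) (γ : Fin d) : Good t R (px γ f) := by
  refine ⟨hf.sm.px γ, fun s x h0 h1 hx => ?_⟩
  rw [slice_px hf.sm]
  have : (fun y => f (s, y)) =ᶠ[nhds x] fun _ => 0 := by
    have : ∀ᶠ y in nhds x, R < ‖y‖ := continuous_norm.continuousAt.eventually (lt_mem_nhds hx)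
    filter_upwards [this] with y hy using hf.vanish s y h0 h1 hy
  rw [this.fderiv_eq]; simp

theorem Good.pt (ht : 0 < t) (hf : Good t R f) : Good t R (pt f) := by
  refine ⟨hf.sm.pt, fun s x h0 h1 hx => ?_⟩
  have h := (slice_pt hf.sm s x).hasDerivWithinAt (s := Set.Icc 0 t)
  have h2 : HasDerivWithinAt (fun r => f (r, x)) 0 (Set.Icc 0 t) s :=
    (hasDerivWithinAt_const s (Set.Icc 0 t) (0:ℝ)).congr
      (fun r hr => hf.vanish r x hr.1 hr.2 hx) (hf.vanish s x h0 h1 hx)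
  exact (uniqueDiffOn_Icc ht s ⟨h0, h1⟩).eq_deriv _ h h2

theorem Good.mul_right (hf : Good t R f) (hg : Sm g) : Good t R (fun p => f p * g p) :=
  ⟨hf.sm.mul' hg, fun s x h0 h1 hx => by simp [hf.vanish s x h0 h1 hx]⟩
theorem Good.mul_left (hg : Sm g) (hf : Good t R f) : Good t R (fun p => g p * f p) :=
  ⟨hg.mul' hf.sm, fun s x h0 h1 hx => by simp [hf.vanish s x h0 h1 hx]⟩
theorem Good.add (hf : Good t R f) (hg : Good t R g) : Good t R (fun p => f p + g p) :=
  ⟨hf.sm.add' hg.sm, fun s x h0 h1 hx => by simp [hf.vanish s x h0 h1 hx, hg.vanish s x h0 h1 hx]⟩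
theorem Good.const_mul (k : ℝ) (hf : Good t R f) : Good t R (fun p => k * f p) :=
  hf.mul_left (Sm.const k)
theorem Good.sum {ι : Type*} [Fintype ι] {F : ι → ℝ × (Fin d → ℝ) → ℝ}
    (h : ∀ i, Good t R (F i)) : Good t R (fun p => ∑ i, F i p) :=
  ⟨Sm.sum fun i => (h i).sm, fun s x h0 h1 hx => by
    simp [fun i => (h i).vanish s x h0 h1 hx]⟩
theorem Good.lap (hf : Good t R f) : Good t R (lap f) := by
  unfold _root_.lap
  exact Good.sum fun γ => (hf.px γ).px γ

theorem Good.integrable (hf : Good t R f) {s : ℝ} (h0 : 0 ≤ s) (h1 : s ≤ t) :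
    Integrable (fun x => f (s, x)) := by
  apply Continuous.integrable_of_hasCompactSupport
  · exact hf.sm.continuous.comp (by fun_prop)
  · apply HasCompactSupport.intro (isCompact_closedBall (0 : Fin d → ℝ) R)
    intro x hx
    exact hf.vanish s x h0 h1 (by simpa using hx)

theorem Good.continuousOn (hf : Good t R f) :
    ContinuousOn (fun s => ∫ x, f (s, x)) (Set.Icc 0 t) := by
  apply continuousOn_integral_of_compact_support (f := fun s x => f (s, x))
    (isCompact_closedBall (0 : Fin d → ℝ) R)
  · exact hf.sm.continuous.continuousOn
  · intro s x hs hx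
    exact hf.vanish s x hs.1 hs.2 (by simpa using hx)

theorem Good.intervalIntegrable (ht : 0 ≤ t) (hf : Good t R f) :
    IntervalIntegrable (fun s => ∫ x, f (s, x)) volume 0 t := by
  apply ContinuousOn.intervalIntegrable
  rw [Set.uIcc_of_le ht]; exact hf.continuousOn

theorem Good.ftc (ht : 0 < t) (hf : Good t R f) :
    (∫ x, f (t, x)) - ∫ x, f (0, x) = ∫ s in (0:ℝ)..t, ∫ x, _root_.pt f (s, x) := by
  have hp := hf.pt ht
  rw [intervalIntegral_integral_swap, ← integral_sub (hf.integrable ht.le le_rfl)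
    (hf.integrable le_rfl ht.le)]
  · congr 1; ext x
    rw [intervalIntegral.integral_eq_sub_of_hasDerivAt (fun s _ => slice_pt hf.sm s x)]
    apply Continuous.intervalIntegrable
    exact hp.sm.continuous.comp (by fun_prop)
  · have hc : IntegrableOn (_root_.pt f) (Set.Icc 0 t ×ˢ Metric.closedBall (0 : Fin d → ℝ) R)
      (volume.prod volume) :=
      hp.sm.continuous.continuousOn.integrableOn_compact
        (isCompact_Icc.prod (isCompact_closedBall _ _))
    have h2 : IntegrableOn (_root_.pt f) (Set.Icc 0 t ×ˢ (Set.univ : Set (Fin d → ℝ)))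
        (volume.prod volume) := by
      apply hc.of_forall_sdiff_eq_zero (measurableSet_Icc.prod MeasurableSet.univ)
      rintro ⟨s, x⟩ ⟨h1, h2⟩
      apply hp.vanish s x h1.1.1 h1.1.2
      by_contra hh
      exact h2 ⟨h1.1, by simpa using hh⟩
    have h3 := h2.mono_set (Set.prod_mono (s₁ := Set.uIoc 0 t) (t₁ := Set.univ)
      (by rw [Set.uIoc_of_le ht.le]; exact Set.Ioc_subset_Icc_self) subset_rfl)
    rw [IntegrableOn, ← Measure.prod_restrict, Measure.restrict_univ] at h3
    exact h3

theorem Null.div (hf : Good t R f) (γ : Fin d) : Null t (px γ f) := by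
  intro s h0 h1
  have hi := (hf.px γ).integrable h0 h1
  refine ⟨hi, ?_⟩
  have hd : Differentiable ℝ (fun y => f (s, y)) := fun x =>
    (slice_hasFDerivAt hf.sm s x).differentiableAt
  have := integral_mul_fderiv_eq_neg_fderiv_mul_of_integrable (μ := (volume : Measure (Fin d → ℝ)))
    (f := fun _ => (1:ℝ)) (g := fun y => f (s, y)) (v := Pi.single γ 1)
    (by simp) (by simpa [← slice_px hf.sm] using hi) (by simpa using hf.integrable h0 h1)
    (fun x _ => by fun_prop) (fun x _ => hd x)
  simpa [← slice_px hf.sm] using this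

theorem Null.add (hf : Null t f) (hg : Null t g) : Null t (fun p => f p + g p) := by
  intro s h0 h1
  refine ⟨(hf s h0 h1).1.add (hg s h0 h1).1, ?_⟩
  rw [integral_add (hf s h0 h1).1 (hg s h0 h1).1, (hf s h0 h1).2, (hg s h0 h1).2, add_zero]
theorem Null.const_mul (k : ℝ) (hf : Null t f) : Null t (fun p => k * f p) := by
  intro s h0 h1
  refine ⟨(hf s h0 h1).1.const_mul k, ?_⟩
  rw [integral_const_mul, (hf s h0 h1).2, mul_zero]
theorem Null.sum {ι : Type*} [Fintype ι] {F : ι → ℝ × (Fin d → ℝ) → ℝ}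
    (h : ∀ i, Null t (F i)) : Null t (fun p => ∑ i, F i p) := by
  intro s h0 h1
  refine ⟨integrable_finsetSum _ fun i _ => (h i s h0 h1).1, ?_⟩
  rw [integral_finsetSum _ fun i _ => (h i s h0 h1).1]
  simp [fun i => (h i s h0 h1).2]
theorem Null.congr (hf : Null t f) (h : ∀ s x, 0 ≤ s → s ≤ t → g (s, x) = f (s, x)) :
    Null t g := by
  intro s h0 h1
  have : (fun x => g (s, x)) = fun x => f (s, x) := funext fun x => h s x h0 h1
  rw [this]; exact hf s h0 h1

theorem Null.parts (hf : Good t R f) (hg : Sm g) (γ : Fin d) :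
    Null t (fun p => px γ f p * g p + f p * px γ g p) :=
  (Null.div (hf.mul_right hg) γ).congr fun _ _ _ _ => (px_mul hf.sm hg γ _).symm

end infra

/-! ### pointwise algebra -/

noncomputable def tr2 (q : Fin 3 → Fin 3 → ℝ) : ℝ := ∑ α, ∑ β, q α β * q β α

noncomputable def bulk (a b c : ℝ) (q : Fin 3 → Fin 3 → ℝ) (α β : Fin 3) : ℝ :=
  - a * q α β + b * ((∑ γ, q α γ * q γ β) - kron α β / 3 * tr2 q) - c * q α β * tr2 q

theorem tr2_eq {q : Fin 3 → Fin 3 → ℝ} (hq : ∀ α β, q α β = q β α) :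
    tr2 q = ∑ α, ∑ β, q α β ^ 2 := by
  unfold tr2
  refine Finset.sum_congr rfl fun α _ => Finset.sum_congr rfl fun β _ => ?_
  rw [hq β α]; ring

theorem tr2_nonneg {q : Fin 3 → Fin 3 → ℝ} (hq : ∀ α β, q α β = q β α) : 0 ≤ tr2 q := by
  rw [tr2_eq hq]; positivity

theorem sq_bound {q : Fin 3 → Fin 3 → ℝ} (hq : ∀ α β, q α β = q β α) :
    ∑ α, ∑ β, (∑ γ, q α γ * q γ β) ^ 2 ≤ tr2 q ^ 2 := by
  have h : ∀ α β, (∑ γ, q α γ * q γ β) ^ 2 ≤ (∑ γ, q α γ ^ 2) * (∑ γ, q β γ ^ 2) := by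
    intro α β
    have := Finset.sum_mul_sq_le_sq_mul_sq Finset.univ (fun γ => q α γ) (fun γ => q γ β)
    simpa [fun γ => hq γ β] using this
  calc _ ≤ ∑ α, ∑ β, (∑ γ, q α γ ^ 2) * (∑ γ, q β γ ^ 2) :=
        Finset.sum_le_sum fun α _ => Finset.sum_le_sum fun β _ => h α β
    _ = tr2 q ^ 2 := by
        rw [tr2_eq hq, sq, Finset.sum_mul_sum]

theorem bulk_dot {a b c : ℝ} (hc : 0 < c) {q : Fin 3 → Fin 3 → ℝ} (hq : ∀ α β, q α β = q β α)
    (h0 : ∑ α, q α α = 0) :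
    ∑ α, ∑ β, q α β * bulk a b c q α β ≤ (|a| + b ^ 2 / (4 * c)) * tr2 q := by
  have hy := sq_bound hq
  have ht := tr2_nonneg hq
  have ht2 := tr2_eq hq
  have e1 : ∑ α, ∑ β, q α β * bulk a b c q α β = - a * tr2 q +
      ∑ α, ∑ β, b * (q α β * (∑ γ, q α γ * q γ β)) - c * tr2 q ^ 2 := by
    unfold bulk
    generalize hT : tr2 q = T at *
    generalize (fun α β => ∑ γ, q α γ * q γ β) = y
    have hk : ∑ α, ∑ β, q α β * kron α β = 0 := by
      rw [← h0]; simp [kron]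
    calc _ = ∑ α, ∑ β, (-a * q α β ^ 2 + b * (q α β * (∑ γ, q α γ * q γ β))
            - b * T / 3 * (q α β * kron α β) - c * T * q α β ^ 2) := by
          refine Finset.sum_congr rfl fun α _ => Finset.sum_congr rfl fun β _ => ?_
          ring
      _ = _ := by
          simp only [Finset.sum_add_distrib, Finset.sum_sub_distrib, ← Finset.mul_sum, hk, ← ht2]
          ring
  have e2 : ∑ α, ∑ β, b * (q α β * (∑ γ, q α γ * q γ β)) ≤
      ∑ α, ∑ β, (c * (∑ γ, q α γ * q γ β) ^ 2 + b ^ 2 / (4 * c) * q α β ^ 2) := by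
    refine Finset.sum_le_sum fun α _ => Finset.sum_le_sum fun β _ => ?_
    generalize (∑ γ, q α γ * q γ β) = y
    have : c * y ^ 2 + b ^ 2 / (4 * c) * q α β ^ 2 - b * (q α β * y)
        = (2 * c * y - b * q α β) ^ 2 / (4 * c) := by field_simp; ring
    have h2 : 0 ≤ (2 * c * y - b * q α β) ^ 2 / (4 * c) := by positivity
    linarith
  simp only [Finset.sum_add_distrib, ← Finset.mul_sum, ← ht2] at e2
  simp only [← Finset.mul_sum] at e1
  have h3 : -a * tr2 q ≤ |a| * tr2 q := mul_le_mul_of_nonneg_right (neg_le_abs a) ht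
  have h4 := mul_le_mul_of_nonneg_left hy hc.le
  rw [e1]; linarith

theorem bulk_sq {a b c : ℝ} {q : Fin 3 → Fin 3 → ℝ} (hq : ∀ α β, q α β = q β α) :
    ∑ α, ∑ β, bulk a b c q α β ^ 2 ≤ 3 * (a ^ 2 + b ^ 2 + c ^ 2) * (tr2 q + tr2 q ^ 3) := by
  have hy := sq_bound hq
  have ht := tr2_nonneg hq
  have ht2 := tr2_eq hq
  have e0 : ∑ α, ∑ γ, q α γ * q γ α = tr2 q := rfl
  have e1 : ∑ α, ∑ β, ((∑ γ, q α γ * q γ β) - kron α β / 3 * tr2 q) ^ 2 ≤ tr2 q ^ 2 := by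
    have hk : ∑ α : Fin 3, ∑ β : Fin 3, kron α β ^ 2 = 3 := by simp [kron]
    have hk2 : ∑ α, ∑ β, kron α β * (∑ γ, q α γ * q γ β) = tr2 q := by
      rw [← e0]; simp [kron]
    have : ∑ α, ∑ β, ((∑ γ, q α γ * q γ β) - kron α β / 3 * tr2 q) ^ 2 =
      ∑ α, ∑ β, ((∑ γ, q α γ * q γ β) ^ 2 - 2 / 3 * tr2 q * (kron α β * (∑ γ, q α γ * q γ β))
        + tr2 q ^ 2 / 9 * kron α β ^ 2) := by
      refine Finset.sum_congr rfl fun α _ => Finset.sum_congr rfl fun β _ => ?_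
      ring
    rw [this]
    simp only [Finset.sum_add_distrib, Finset.sum_sub_distrib, ← Finset.mul_sum, hk, hk2]
    nlinarith [sq_nonneg (tr2 q)]
  have e2 : ∑ α, ∑ β, bulk a b c q α β ^ 2 ≤ ∑ α, ∑ β, (3 * a ^ 2 * q α β ^ 2 +
      3 * b ^ 2 * ((∑ γ, q α γ * q γ β) - kron α β / 3 * tr2 q) ^ 2
      + 3 * c ^ 2 * tr2 q ^ 2 * q α β ^ 2) := by
    refine Finset.sum_le_sum fun α _ => Finset.sum_le_sum fun β _ => ?_
    unfold bulk
    generalize (∑ γ, q α γ * q γ β) - kron α β / 3 * tr2 q = y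
    generalize q α β = z
    generalize tr2 q = T
    nlinarith [sq_nonneg (-a * z - b * y), sq_nonneg (-a * z + c * z * T),
      sq_nonneg (b * y + c * z * T)]
  simp only [Finset.sum_add_distrib, ← Finset.mul_sum, ← ht2] at e2
  have h5 : tr2 q ^ 2 ≤ tr2 q + tr2 q ^ 3 := by nlinarith [mul_nonneg ht (sq_nonneg (tr2 q - 1))]
  have h6 : tr2 q ≤ tr2 q + tr2 q ^ 3 := by have := pow_nonneg ht 3; linarith
  have h7 : tr2 q ^ 3 ≤ tr2 q + tr2 q ^ 3 := by linarith
  have k1 := mul_le_mul_of_nonneg_left (e1.trans h5) (by positivity : 0 ≤ 3 * b ^ 2)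
  have k2 := mul_le_mul_of_nonneg_left h6 (by positivity : 0 ≤ 3 * a ^ 2)
  have k3 := mul_le_mul_of_nonneg_left h7 (by positivity : 0 ≤ 3 * c ^ 2)
  have k4 : 3 * c ^ 2 * tr2 q ^ 2 * tr2 q = 3 * c ^ 2 * tr2 q ^ 3 := by ring
  linarith

theorem rot_dot {w q : Fin 3 → Fin 3 → ℝ} (hq : ∀ α β, q α β = q β α)
    (hw : ∀ α β, w α β = - w β α) :
    ∑ α, ∑ β, q α β * (∑ γ, (w α γ * q γ β - q α γ * w γ β)) = 0 := by
  have h00 := hw 0 0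
  have h11 := hw 1 1
  have h22 := hw 2 2
  simp only [Fin.sum_univ_three, hw 1 0, hw 2 0, hw 2 1, hq 1 0, hq 2 0, hq 2 1,
    show w 0 0 = 0 by linarith, show w 1 1 = 0 by linarith, show w 2 2 = 0 by linarith]
  ring

theorem rot_lap {w q l : Fin 3 → Fin 3 → ℝ} (hq : ∀ α β, q α β = q β α)
    (hl : ∀ α β, l α β = l β α) (hw : ∀ α β, w α β = - w β α) :
    ∑ α, ∑ β, l α β * (∑ γ, (w α γ * q γ β - q α γ * w γ β)) =
      - ∑ α, ∑ β, w α β * (∑ γ, (q α γ * l γ β - l α γ * q γ β)) := by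
  have h00 := hw 0 0
  have h11 := hw 1 1
  have h22 := hw 2 2
  simp only [Fin.sum_univ_three, hw 1 0, hw 2 0, hw 2 1, hq 1 0, hq 2 0, hq 2 1,
    hl 1 0, hl 2 0, hl 2 1,
    show w 0 0 = 0 by linarith, show w 1 1 = 0 by linarith, show w 2 2 = 0 by linarith]
  ring

theorem vort_anti {d : ℕ} (u : ℝ × (Fin d → ℝ) → Fin d → ℝ) (p : ℝ × (Fin d → ℝ))
    (α β : Fin 3) : vort3 u p α β = - vort3 u p β α := by
  unfold vort3
  split_ifs <;> ring

theorem vort_dot {d : ℕ} (hd : d = 2 ∨ d = 3) (u : ℝ × (Fin d → ℝ) → Fin d → ℝ)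
    (p : ℝ × (Fin d → ℝ)) {A : Fin 3 → Fin 3 → ℝ} (hA : ∀ α β, A α β = - A β α) :
    ∑ α : Fin d, ∑ β : Fin d, px β (fun q => u q α) p * A (e3 α) (e3 β)
      = ∑ α, ∑ β, vort3 u p α β * A α β := by
  have h00 := hA 0 0
  have h11 := hA 1 1
  have h22 := hA 2 2
  rcases hd with rfl | rfl
  · have e0 : e3 (0 : Fin 2) = 0 := rfl
    have e1 : e3 (1 : Fin 2) = 1 := rfl
    simp only [Fin.sum_univ_three, Fin.sum_univ_two, e0, e1, hA 1 0, hA 2 0, hA 2 1,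
      show A 0 0 = 0 by linarith, show A 1 1 = 0 by linarith, show A 2 2 = 0 by linarith]
    simp [vort3]
    ring
  · have e0 : e3 (0 : Fin 3) = 0 := rfl
    have e1 : e3 (1 : Fin 3) = 1 := rfl
    have e2 : e3 (2 : Fin 3) = 2 := rfl
    simp only [Fin.sum_univ_three, e0, e1, e2, hA 1 0, hA 2 0, hA 2 1,
      show A 0 0 = 0 by linarith, show A 1 1 = 0 by linarith, show A 2 2 = 0 by linarith]
    simp [vort3]
    ring

/-! ### the solution context -/

structure Sol {d : ℕ} (t R L Γ a b c ν : ℝ) (Q : ℝ × (Fin d → ℝ) → Fin 3 → Fin 3 → ℝ)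
    (u : ℝ × (Fin d → ℝ) → Fin d → ℝ) (P : ℝ × (Fin d → ℝ) → ℝ) : Prop where
  hQ : ∀ α β, Good t R (fun p => Q p α β)
  hu : ∀ α, Good t R (fun p => u p α)
  hP : Good t R P
  sym : ∀ p α β, Q p α β = Q p β α
  tr0 : ∀ p, ∑ α, Q p α α = 0
  eqQ : ∀ s x, 0 ≤ s → s ≤ t → QTensorEq L Γ a b c Q u (s, x)
  eqU : ∀ s x, 0 ≤ s → s ≤ t → MomentumEq L ν Q u P (s, x)
  dv : ∀ s x, 0 ≤ s → s ≤ t → DivFree u (s, x)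

section solution
variable {d : ℕ} {t R L Γ a b c ν : ℝ} {Q : ℝ × (Fin d → ℝ) → Fin 3 → Fin 3 → ℝ}
  {u : ℝ × (Fin d → ℝ) → Fin d → ℝ} {P : ℝ × (Fin d → ℝ) → ℝ}

theorem Null.time_mul {f : ℝ × (Fin d → ℝ) → ℝ} (k : ℝ → ℝ) (hf : Null t f) :
    Null t (fun p => k p.1 * f p) := by
  intro s h0 h1
  exact hf.const_mul (k s) s h0 h1

theorem Sol.transport (S : Sol t R L Γ a b c ν Q u P) {w : ℝ × (Fin d → ℝ) → ℝ} (hw : Sm w) :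
    Null t (fun p => ∑ β, u p β * px β w p) := by
  refine (Null.sum fun β => Null.parts (S.hu β) hw β).congr fun s x h0 h1 => ?_
  have := S.dv s x h0 h1
  unfold DivFree at this
  rw [Finset.sum_add_distrib, ← Finset.sum_mul, this]; ring

theorem trQ2_tr2 (p) : trQ2 Q p = tr2 (Q p) := rfl

theorem molH_eq (p) (α β) :
    molH L a b c Q p α β = L * lap (fun q => Q q α β) p + bulk a b c (Q p) α β := by
  unfold molH bulk; rw [trQ2_tr2]; ring

theorem Sol.trQ2_eq (S : Sol t R L Γ a b c ν Q u P) :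
    trQ2 Q = fun p => ∑ α, ∑ β, Q p α β * Q p α β := by
  funext p
  unfold trQ2
  refine Finset.sum_congr rfl fun α _ => Finset.sum_congr rfl fun β _ => ?_
  rw [S.sym p β α]

theorem Sol.good_trQ2 (S : Sol t R L Γ a b c ν Q u P) : Good t R (trQ2 Q) := by
  rw [S.trQ2_eq]
  exact Good.sum fun α => Good.sum fun β => (S.hQ α β).mul_right (S.hQ α β).sm

theorem Sol.px_trQ2 (S : Sol t R L Γ a b c ν Q u P) (γ : Fin d) (p) :
    px γ (trQ2 Q) p = 2 * ∑ α, ∑ β, Q p α β * px γ (fun q => Q q α β) p := by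
  have hs : ∀ α β, Sm (fun q => Q q α β) := fun α β => (S.hQ α β).sm
  rw [S.trQ2_eq, px_sum (fun α => Sm.sum fun β => (hs α β).mul' (hs α β))]
  simp only [px_sum (fun β => (hs _ β).mul' (hs _ β)), px_mul (hs _ _) (hs _ _), Finset.mul_sum]
  refine Finset.sum_congr rfl fun α _ => Finset.sum_congr rfl fun β _ => ?_
  ring

theorem Sol.pt_trQ2 (S : Sol t R L Γ a b c ν Q u P) (p) :
    pt (trQ2 Q) p = 2 * ∑ α, ∑ β, Q p α β * pt (fun q => Q q α β) p := by
  have hs : ∀ α β, Sm (fun q => Q q α β) := fun α β => (S.hQ α β).sm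
  rw [S.trQ2_eq, pt_sum (fun α => Sm.sum fun β => (hs α β).mul' (hs α β))]
  simp only [pt_sum (fun β => (hs _ β).mul' (hs _ β)), pt_mul (hs _ _) (hs _ _), Finset.mul_sum]
  refine Finset.sum_congr rfl fun α _ => Finset.sum_congr rfl fun β _ => ?_
  ring

theorem Sol.lap_trQ2 (S : Sol t R L Γ a b c ν Q u P) (p) :
    lap (trQ2 Q) p = 2 * (∑ α, ∑ β, Q p α β * lap (fun q => Q q α β) p) + 2 * gradQsq Q p := by
  have hs : ∀ α β, Sm (fun q => Q q α β) := fun α β => (S.hQ α β).sm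
  have key : ∀ γ : Fin d, px γ (px γ (trQ2 Q)) p
      = 2 * (∑ α, ∑ β, Q p α β * px γ (px γ (fun q => Q q α β)) p)
        + 2 * ∑ α, ∑ β, (px γ (fun q => Q q α β) p) ^ 2 := by
    intro γ
    have h1 : px γ (trQ2 Q) = fun p => ∑ α, ∑ β, (2 * Q p α β) * px γ (fun q => Q q α β) p := by
      funext p
      rw [S.px_trQ2]; simp only [Finset.mul_sum, mul_assoc]
    have h2 : ∀ α β, Sm (fun p => 2 * Q p α β) := fun α β => (Sm.const 2).mul' (hs α β)
    have h3 : ∀ α β, px γ (fun p => 2 * Q p α β) p = 2 * px γ (fun q => Q q α β) p := by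
      intro α β
      rw [px_mul (Sm.const 2) (hs α β), px_const]; ring
    rw [h1, px_sum (fun α => Sm.sum fun β => (h2 α β).mul' ((hs α β).px γ))]
    simp only [px_sum (fun β => (h2 _ β).mul' ((hs _ β).px γ)), px_mul (h2 _ _) ((hs _ _).px γ),
      Finset.mul_sum, h3, ← Finset.sum_add_distrib]
    refine Finset.sum_congr rfl fun α _ => Finset.sum_congr rfl fun β _ => ?_
    ring
  unfold lap gradQsq
  simp only [key, Finset.sum_add_distrib, ← Finset.mul_sum]
  congr 2
  rw [Finset.sum_comm]
  refine Finset.sum_congr rfl fun α _ => ?_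
  rw [Finset.sum_comm]
  simp only [Finset.mul_sum]

theorem Sol.pt_trQ2_eq (S : Sol t R L Γ a b c ν Q u P) {s : ℝ} {x} (h0 : 0 ≤ s) (h1 : s ≤ t) :
    pt (trQ2 Q) (s, x) = - (∑ γ, u (s, x) γ * px γ (trQ2 Q) (s, x))
      + Γ * L * (lap (trQ2 Q) (s, x) - 2 * gradQsq Q (s, x))
      + 2 * Γ * ∑ α, ∑ β, Q (s, x) α β * bulk a b c (Q (s, x)) α β := by
  have h := S.eqQ s x h0 h1
  unfold QTensorEq at h
  have h' : ∀ α β, pt (fun q => Q q α β) (s, x) =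
      - (∑ γ : Fin d, u (s, x) γ * px γ (fun q => Q q α β) (s, x))
      + (∑ γ : Fin 3, (vort3 u (s, x) α γ * Q (s, x) γ β - Q (s, x) α γ * vort3 u (s, x) γ β))
      + Γ * L * lap (fun q => Q q α β) (s, x) + Γ * bulk a b c (Q (s, x)) α β := by
    intro α β
    have := h α β
    rw [molH_eq] at this
    linarith
  have hr := rot_dot (S.sym (s, x)) (vort_anti u (s, x))
  rw [S.pt_trQ2, S.lap_trQ2]
  have e1 : ∑ γ, u (s, x) γ * px γ (trQ2 Q) (s, x) = 2 * ∑ α, ∑ β, Q (s, x) α β *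
      (∑ γ : Fin d, u (s, x) γ * px γ (fun q => Q q α β) (s, x)) := by
    simp only [S.px_trQ2, Finset.mul_sum]
    rw [Finset.sum_comm]
    refine Finset.sum_congr rfl fun α _ => ?_
    rw [Finset.sum_comm]
    refine Finset.sum_congr rfl fun β _ => Finset.sum_congr rfl fun γ _ => ?_
    ring
  rw [e1]
  have e2 : ∑ α, ∑ β, Q (s, x) α β * pt (fun q => Q q α β) (s, x) =
      ∑ α, ∑ β, (-(Q (s, x) α β * (∑ γ : Fin d, u (s, x) γ * px γ (fun q => Q q α β) (s, x)))
      + Q (s, x) α β * (∑ γ : Fin 3,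
          (vort3 u (s, x) α γ * Q (s, x) γ β - Q (s, x) α γ * vort3 u (s, x) γ β))
      + Γ * L * (Q (s, x) α β * lap (fun q => Q q α β) (s, x))
      + Γ * (Q (s, x) α β * bulk a b c (Q (s, x)) α β)) := by
    refine Finset.sum_congr rfl fun α _ => Finset.sum_congr rfl fun β _ => ?_
    rw [h']; ring
  rw [e2]
  simp only [Finset.sum_add_distrib, Finset.sum_neg_distrib, ← Finset.mul_sum Finset.univ _ (Γ * L),
    ← Finset.mul_sum Finset.univ _ Γ, hr]
  ring

/-- `L²` and `L⁶` bound. -/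
theorem Sol.low (S : Sol t R L Γ a b c ν Q u P) (ht : 0 < t) (hc : 0 < c) (hL : 0 < L)
    (hΓ : 0 < Γ) {K : ℝ} (hK : K = 6 * Γ * (|a| + b ^ 2 / (4 * c))) :
    ∫ x, (trQ2 Q (t, x) + trQ2 Q (t, x) ^ 3) ≤
      Real.exp (K * t) * ∫ x, (trQ2 Q (0, x) + trQ2 Q (0, x) ^ 3) := by
  have gq := S.good_trQ2
  have sq := gq.sm
  obtain ⟨q, hq⟩ : ∃ q, q = trQ2 Q := ⟨_, rfl⟩
  have hqpt := fun s x h0 h1 => S.pt_trQ2_eq (s := s) (x := x) h0 h1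
  rw [← hq] at gq sq hqpt ⊢
  have gy : Good t R (fun p => q p + q p * q p * q p) := gq.add ((gq.mul_right sq).mul_right sq)
  obtain ⟨E, hE⟩ : ∃ E : ℝ × (Fin d → ℝ) → ℝ, E = fun p => Real.exp (-K * p.1) := ⟨_, rfl⟩
  have sE : Sm E := by rw [hE]; unfold Sm; fun_prop
  have ptE : ∀ p, pt E p = -K * E p := by
    rintro ⟨s, x⟩
    have h1 := slice_pt sE s x
    have h2 : HasDerivAt (fun r => E (r, x)) (-K * E (s, x)) s := by
      rw [hE]
      have := ((hasDerivAt_id s).const_mul (-K)).exp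
      exact HasDerivAt.congr_deriv (f' := Real.exp (-K * s) * (-K * 1)) this (by ring)
    exact h1.unique h2
  have gφ : Good t R (fun p => E p * (q p + q p * q p * q p)) := gy.mul_left sE
  have spq : Sm (fun p => 1 + 3 * (q p * q p)) :=
    (Sm.const 1).add' ((Sm.const 3).mul' (sq.mul' sq))
  have pxq2 : ∀ γ p, px γ (fun p => 1 + 3 * (q p * q p)) p = 6 * q p * px γ q p := by
    intro γ p
    rw [px_add (Sm.const 1) ((Sm.const 3).mul' (sq.mul' sq)), px_mul (Sm.const 3) (sq.mul' sq),
      px_mul sq sq, px_const, px_const]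
    ring
  have pxy : ∀ γ p, px γ (fun p => q p + q p * q p * q p) p = (1 + 3 * (q p * q p)) * px γ q p := by
    intro γ p
    rw [px_add sq ((sq.mul' sq).mul' sq), px_mul (sq.mul' sq) sq, px_mul sq sq]
    ring
  have pty : ∀ p, pt (fun p => q p + q p * q p * q p) p = (1 + 3 * (q p * q p)) * pt q p := by
    intro p
    rw [pt_add sq ((sq.mul' sq).mul' sq), pt_mul (sq.mul' sq) sq, pt_mul sq sq]
    ring
  have m1 := S.transport gy.sm
  have m2 : Null t (fun p => ∑ γ, px γ (fun p => px γ q p * (1 + 3 * (q p * q p))) p) :=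
    Null.sum fun γ => Null.div ((gq.px γ).mul_right spq) γ
  have N := (((m1.const_mul (-1)).add (m2.const_mul (Γ * L))).time_mul (fun s => Real.exp (-K * s)))
  have pw : ∀ s x, 0 ≤ s → s ≤ t → pt (fun p => E p * (q p + q p * q p * q p)) (s, x) ≤
      Real.exp (-K * s) * (-1 * (∑ β, u (s, x) β * px β (fun p => q p + q p * q p * q p) (s, x))
       + Γ * L * ∑ γ, px γ (fun p => px γ q p * (1 + 3 * (q p * q p))) (s, x)) := by
    intro s x h0 h1
    have hEs : E (s, x) = Real.exp (-K * s) := by rw [hE]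
    rw [pt_mul sE gy.sm, ptE, pty, hqpt s x h0 h1, hEs]
    have hb := bulk_dot (a := a) (b := b) hc (S.sym (s, x)) (S.tr0 (s, x))
    have hT : tr2 (Q (s, x)) = q (s, x) := by rw [hq]; rfl
    have hT0 := tr2_nonneg (S.sym (s, x))
    rw [hT] at hb hT0
    have hg : 0 ≤ gradQsq Q (s, x) := by unfold gradQsq; positivity
    have i2 : ∑ γ, px γ (fun p => px γ q p * (1 + 3 * (q p * q p))) (s, x) =
        (1 + 3 * (q (s, x) * q (s, x))) * lap q (s, x) + 6 * q (s, x) * ∑ γ, px γ q (s, x) ^ 2 := by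
      unfold lap
      rw [Finset.mul_sum, Finset.mul_sum, ← Finset.sum_add_distrib]
      refine Finset.sum_congr rfl fun γ _ => ?_
      rw [px_mul (sq.px γ) spq, pxq2]; ring
    have i1 : ∑ β, u (s, x) β * px β (fun p => q p + q p * q p * q p) (s, x) =
        (1 + 3 * (q (s, x) * q (s, x))) * ∑ β, u (s, x) β * px β q (s, x) := by
      rw [Finset.mul_sum]
      refine Finset.sum_congr rfl fun γ _ => ?_
      rw [pxy]; ring
    rw [i1, i2]
    have hpos := Real.exp_pos (-K * s)
    generalize Real.exp (-K * s) = e at *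
    have hsq : 0 ≤ ∑ γ, px γ q (s, x) ^ 2 := by positivity
    generalize ∑ γ, px γ q (s, x) ^ 2 = X at *
    generalize ∑ β, u (s, x) β * px β q (s, x) = Y at *
    generalize ∑ α, ∑ β, Q (s, x) α β * bulk a b c (Q (s, x)) α β = Z at *
    generalize lap q (s, x) = W at *
    generalize gradQsq Q (s, x) = G at *
    generalize q (s, x) = z at *
    have hk : 0 ≤ |a| + b ^ 2 / (4 * c) := by positivity
    generalize |a| + b ^ 2 / (4 * c) = k at *
    have main : (1 + 3 * (z * z)) * (-Y + Γ * L * (W - 2 * G) + 2 * Γ * Z) - K * (z + z * z * z) ≤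
        -1 * ((1 + 3 * (z * z)) * Y) + Γ * L * ((1 + 3 * (z * z)) * W + 6 * z * X) := by
      have a1 : 0 ≤ Γ * L * (6 * z * X) := by positivity
      have a2 : 0 ≤ (1 + 3 * (z * z)) * (Γ * L * (2 * G)) := by positivity
      have a3 : (1 + 3 * (z * z)) * (2 * Γ) * Z ≤ (1 + 3 * (z * z)) * (2 * Γ) * (k * z) :=
        mul_le_mul_of_nonneg_left hb (by positivity)
      have a4 : 0 ≤ 4 * Γ * k * z := by positivity
      rw [hK]
      linarith
    have := mul_le_mul_of_nonneg_left main hpos.le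
    linarith
  have hle : ∫ s in (0:ℝ)..t, ∫ x, pt (fun p => E p * (q p + q p * q p * q p)) (s, x) ≤
      ∫ s in (0:ℝ)..t, (0:ℝ) := by
    apply intervalIntegral.integral_mono_on ht.le ((gφ.pt ht).intervalIntegrable ht.le) (by simp)
    intro s hs
    have hN := N s hs.1 hs.2
    rw [← hN.2]
    exact integral_mono ((gφ.pt ht).integrable hs.1 hs.2) hN.1 fun x => pw s x hs.1 hs.2
  rw [← gφ.ftc ht] at hle
  simp only [hE, integral_const_mul, mul_zero, Real.exp_zero, one_mul,
    intervalIntegral.integral_zero] at hle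
  have e3 : ∀ p, q p + q p ^ 3 = q p + q p * q p * q p := fun p => by ring
  simp only [e3]
  have h5 : Real.exp (K * t) * Real.exp (-K * t) = 1 := by rw [← Real.exp_add]; simp
  have h6 := mul_le_mul_of_nonneg_left hle (Real.exp_pos (K * t)).le
  rw [mul_sub, ← mul_assoc, h5] at h6
  linarith

theorem Sol.mono (S : Sol t R L Γ a b c ν Q u P) {s : ℝ} (h : s ≤ t) :
    Sol s R L Γ a b c ν Q u P where
  hQ α β := ⟨(S.hQ α β).sm, fun r x h0 h1 => (S.hQ α β).vanish r x h0 (h1.trans h)⟩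
  hu α := ⟨(S.hu α).sm, fun r x h0 h1 => (S.hu α).vanish r x h0 (h1.trans h)⟩
  hP := ⟨S.hP.sm, fun r x h0 h1 => S.hP.vanish r x h0 (h1.trans h)⟩
  sym := S.sym
  tr0 := S.tr0
  eqQ r x h0 h1 := S.eqQ r x h0 (h1.trans h)
  eqU r x h0 h1 := S.eqU r x h0 (h1.trans h)
  dv r x h0 h1 := S.dv r x h0 (h1.trans h)

theorem gradQsq_mul : gradQsq Q = fun p => ∑ γ : Fin d, ∑ α : Fin 3, ∑ β : Fin 3,
    px γ (fun q => Q q α β) p * px γ (fun q => Q q α β) p := by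
  funext p; unfold gradQsq; simp only [pow_two]

theorem Sol.good_grad (S : Sol t R L Γ a b c ν Q u P) : Good t R (gradQsq Q) := by
  rw [gradQsq_mul]
  exact Good.sum fun γ => Good.sum fun α => Good.sum fun β =>
    ((S.hQ α β).px γ).mul_right ((S.hQ α β).px γ).sm

theorem Sol.px_grad (S : Sol t R L Γ a b c ν Q u P) (μ : Fin d) (p) :
    px μ (gradQsq Q) p = 2 * ∑ γ : Fin d, ∑ α : Fin 3, ∑ β : Fin 3,
      px μ (px γ (fun q => Q q α β)) p * px γ (fun q => Q q α β) p := by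
  have hs : ∀ (γ : Fin d) α β, Sm (px γ fun q => Q q α β) := fun γ α β => ((S.hQ α β).px γ).sm
  have h2 := fun γ α β => (hs γ α β).mul' (hs γ α β)
  rw [gradQsq_mul, px_sum (fun γ => Sm.sum fun α => Sm.sum fun β => h2 γ α β)]
  simp only [px_sum (fun α => Sm.sum fun β => h2 _ α β), px_sum (fun β => h2 _ _ β),
    px_mul (hs _ _ _) (hs _ _ _), Finset.mul_sum]
  refine Finset.sum_congr rfl fun γ _ => Finset.sum_congr rfl fun α _ =>
    Finset.sum_congr rfl fun β _ => ?_
  ring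

theorem Sol.pt_grad (S : Sol t R L Γ a b c ν Q u P) (p) :
    pt (gradQsq Q) p = 2 * ∑ γ : Fin d, ∑ α : Fin 3, ∑ β : Fin 3,
      px γ (fun q => Q q α β) p * px γ (pt (fun q => Q q α β)) p := by
  have hq : ∀ α β, Sm (fun q => Q q α β) := fun α β => (S.hQ α β).sm
  have hs : ∀ (γ : Fin d) α β, Sm (px γ fun q => Q q α β) := fun γ α β => ((S.hQ α β).px γ).sm
  have h2 := fun γ α β => (hs γ α β).mul' (hs γ α β)
  rw [gradQsq_mul, pt_sum (fun γ => Sm.sum fun α => Sm.sum fun β => h2 γ α β)]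
  simp only [pt_sum (fun α => Sm.sum fun β => h2 _ α β), pt_sum (fun β => h2 _ _ β),
    pt_mul (hs _ _ _) (hs _ _ _), Finset.mul_sum, pt_px (hq _ _)]
  refine Finset.sum_congr rfl fun γ _ => Finset.sum_congr rfl fun α _ =>
    Finset.sum_congr rfl fun β _ => ?_
  ring

theorem Sol.good_kin (S : Sol t R L Γ a b c ν Q u P) :
    Good t R (fun p => ∑ α, u p α * u p α) :=
  Good.sum fun α => (S.hu α).mul_right (S.hu α).sm

theorem Sol.px_kin (S : Sol t R L Γ a b c ν Q u P) (γ : Fin d) (p) :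
    px γ (fun p => ∑ α, u p α * u p α) p = 2 * ∑ α, u p α * px γ (fun q => u q α) p := by
  have hs : ∀ α, Sm (fun q => u q α) := fun α => (S.hu α).sm
  rw [px_sum (fun α => (hs α).mul' (hs α))]
  simp only [px_mul (hs _) (hs _), Finset.mul_sum]
  refine Finset.sum_congr rfl fun α _ => ?_
  ring

theorem Sol.pt_kin (S : Sol t R L Γ a b c ν Q u P) (p) :
    pt (fun p => ∑ α, u p α * u p α) p = 2 * ∑ α, u p α * pt (fun q => u q α) p := by
  have hs : ∀ α, Sm (fun q => u q α) := fun α => (S.hu α).sm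
  rw [pt_sum (fun α => (hs α).mul' (hs α))]
  simp only [pt_mul (hs _) (hs _), Finset.mul_sum]
  refine Finset.sum_congr rfl fun α _ => ?_
  ring

noncomputable def stS (Q : ℝ × (Fin d → ℝ) → Fin 3 → Fin 3 → ℝ) (α β : Fin d)
    (q : ℝ × (Fin d → ℝ)) : ℝ :=
  (∑ ζ : Fin 3, ∑ δ : Fin 3, px α (fun r => Q r ζ δ) q * px β (fun r => Q r ζ δ) q)
          - kron α β / (d : ℝ) * gradQsq Q q

noncomputable def stA (Q : ℝ × (Fin d → ℝ) → Fin 3 → Fin 3 → ℝ) (α β : Fin 3)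
    (q : ℝ × (Fin d → ℝ)) : ℝ :=
  ∑ γ : Fin 3, (Q q α γ * lap (fun r => Q r γ β) q - lap (fun r => Q r α γ) q * Q q γ β)

theorem Sol.sm_S (S : Sol t R L Γ a b c ν Q u P) (α β : Fin d) : Sm (stS Q α β) := by
  have hs : ∀ (γ : Fin d) α β, Sm (px γ fun q => Q q α β) := fun γ α β => ((S.hQ α β).px γ).sm
  exact (Sm.sum fun ζ => Sm.sum fun δ => (hs α ζ δ).mul' (hs β ζ δ)).sub'
    ((Sm.const _).mul' S.good_grad.sm)

theorem Sol.sm_A (S : Sol t R L Γ a b c ν Q u P) (α β : Fin 3) : Sm (stA Q α β) := by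
  have hs : ∀ α β, Sm (fun q => Q q α β) := fun α β => (S.hQ α β).sm
  exact Sm.sum fun γ => ((hs α γ).mul' (hs γ β).lap).sub' ((hs α γ).lap.mul' (hs γ β))

theorem Sol.lap_sym (S : Sol t R L Γ a b c ν Q u P) (p) (α β) :
    lap (fun q => Q q α β) p = lap (fun q => Q q β α) p := by
  have : (fun q => Q q α β) = fun q => Q q β α := funext fun q => S.sym q α β
  rw [this]

theorem Sol.momentum (S : Sol t R L Γ a b c ν Q u P) {s : ℝ} {x} (h0 : 0 ≤ s) (h1 : s ≤ t) :
    2 * ∑ α, u (s, x) α * pt (fun q => u q α) (s, x) =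
      - (∑ β, u (s, x) β * px β (fun p => ∑ α, u p α * u p α) (s, x))
      + 2 * ν * (∑ α, u (s, x) α * lap (fun q => u q α) (s, x))
      + 2 * (∑ α, u (s, x) α * px α P (s, x))
      - 2 * L * (∑ α, ∑ β, u (s, x) α * px β (stS Q α β) (s, x))
      + 2 * L * (∑ α, ∑ β, u (s, x) α * px β (stA Q (e3 α) (e3 β)) (s, x)) := by
  have h := S.eqU s x h0 h1
  unfold MomentumEq at h
  have h' : ∀ α, pt (fun q => u q α) (s, x) =
      - (∑ β : Fin d, u (s, x) β * px β (fun q => u q α) (s, x))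
      + ν * lap (fun q => u q α) (s, x) + px α P (s, x)
      - L * (∑ β : Fin d, px β (stS Q α β) (s, x))
      + L * (∑ β : Fin d, px β (stA Q (e3 α) (e3 β)) (s, x)) := by
    intro α
    have h2 := h α
    change _ = ν * lap (fun q => u q α) (s, x) + px α P (s, x)
      - L * (∑ β : Fin d, px β (stS Q α β) (s, x))
      + L * (∑ β : Fin d, px β (stA Q (e3 α) (e3 β)) (s, x)) at h2
    linarith
  have e1 : ∑ β, u (s, x) β * px β (fun p => ∑ α, u p α * u p α) (s, x)
      = 2 * ∑ α, u (s, x) α * (∑ β : Fin d, u (s, x) β * px β (fun q => u q α) (s, x)) := by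
    simp only [S.px_kin, Finset.mul_sum]
    rw [Finset.sum_comm]
    refine Finset.sum_congr rfl fun α _ => Finset.sum_congr rfl fun β _ => ?_
    ring
  rw [e1]
  simp only [← Finset.mul_sum Finset.univ _ (u (s, x) _)]
  have e2 : ∑ α, u (s, x) α * pt (fun q => u q α) (s, x) = ∑ α,
      (-(u (s, x) α * (∑ β : Fin d, u (s, x) β * px β (fun q => u q α) (s, x)))
      + ν * (u (s, x) α * lap (fun q => u q α) (s, x)) + u (s, x) α * px α P (s, x)
      - L * (u (s, x) α * (∑ β : Fin d, px β (stS Q α β) (s, x)))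
      + L * (u (s, x) α * (∑ β : Fin d, px β (stA Q (e3 α) (e3 β)) (s, x)))) := by
    refine Finset.sum_congr rfl fun α _ => ?_
    rw [h']; ring
  rw [e2]
  simp only [Finset.sum_add_distrib, Finset.sum_sub_distrib, Finset.sum_neg_distrib,
    ← Finset.mul_sum Finset.univ _ ν, ← Finset.mul_sum Finset.univ _ L]
  ring

theorem Sol.lapQ_pt (S : Sol t R L Γ a b c ν Q u P) {s : ℝ} {x} (h0 : 0 ≤ s) (h1 : s ≤ t) :
    ∑ α, ∑ β, lap (fun q => Q q α β) (s, x) * pt (fun q => Q q α β) (s, x) =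
      - (∑ α, ∑ β, lap (fun q => Q q α β) (s, x) *
          (∑ γ : Fin d, u (s, x) γ * px γ (fun q => Q q α β) (s, x)))
      - (∑ α, ∑ β, vort3 u (s, x) α β * stA Q α β (s, x))
      + Γ * L * (∑ α, ∑ β, lap (fun q => Q q α β) (s, x) ^ 2)
      + Γ * ∑ α, ∑ β, lap (fun q => Q q α β) (s, x) * bulk a b c (Q (s, x)) α β := by
  have h := S.eqQ s x h0 h1
  unfold QTensorEq at h
  have h' : ∀ α β, pt (fun q => Q q α β) (s, x) =
      - (∑ γ : Fin d, u (s, x) γ * px γ (fun q => Q q α β) (s, x))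
      + (∑ γ : Fin 3, (vort3 u (s, x) α γ * Q (s, x) γ β - Q (s, x) α γ * vort3 u (s, x) γ β))
      + Γ * L * lap (fun q => Q q α β) (s, x) + Γ * bulk a b c (Q (s, x)) α β := by
    intro α β
    have := h α β
    rw [molH_eq] at this
    linarith
  have hr := rot_lap (S.sym (s, x)) (S.lap_sym (s, x)) (vort_anti u (s, x))
  have e2 : ∑ α, ∑ β, lap (fun q => Q q α β) (s, x) * pt (fun q => Q q α β) (s, x) =
      ∑ α, ∑ β, (-(lap (fun q => Q q α β) (s, x) *
        (∑ γ : Fin d, u (s, x) γ * px γ (fun q => Q q α β) (s, x)))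
      + lap (fun q => Q q α β) (s, x) * (∑ γ : Fin 3,
          (vort3 u (s, x) α γ * Q (s, x) γ β - Q (s, x) α γ * vort3 u (s, x) γ β))
      + Γ * L * (lap (fun q => Q q α β) (s, x) ^ 2)
      + Γ * (lap (fun q => Q q α β) (s, x) * bulk a b c (Q (s, x)) α β)) := by
    refine Finset.sum_congr rfl fun α _ => Finset.sum_congr rfl fun β _ => ?_
    rw [h']; ring
  rw [e2]
  simp only [Finset.sum_add_distrib, Finset.sum_neg_distrib, ← Finset.mul_sum Finset.univ _ (Γ * L),
    ← Finset.mul_sum Finset.univ _ Γ, hr]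
  unfold stA
  ring

theorem stA_anti (S : Sol t R L Γ a b c ν Q u P) (p) (α β) : stA Q α β p = - stA Q β α p := by
  unfold stA
  rw [← Finset.sum_neg_distrib]
  refine Finset.sum_congr rfl fun γ _ => ?_
  rw [S.sym p α γ, S.lap_sym p γ β, S.lap_sym p α γ, S.sym p γ β]; ring

/-- the stress terms -/
theorem Sol.stress (S : Sol t R L Γ a b c ν Q u P) {s : ℝ} {x} (h0 : 0 ≤ s) (h1 : s ≤ t) :
    ∑ α : Fin d, ∑ β : Fin d, px β (fun q => u q α) (s, x) * stS Q α β (s, x) =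
    ∑ ζ : Fin 3, ∑ δ : Fin 3, ∑ α : Fin d, ∑ β : Fin d, px β (fun q => u q α) (s, x) *
      (px α (fun r => Q r ζ δ) (s, x) * px β (fun r => Q r ζ δ) (s, x)) := by
  have hd := S.dv s x h0 h1
  unfold DivFree at hd
  have e : ∑ α : Fin d, ∑ β : Fin d, px β (fun q => u q α) (s, x) *
      (kron α β / (d : ℝ) * gradQsq Q (s, x)) = 0 := by
    have : ∀ α : Fin d, ∑ β : Fin d, px β (fun q => u q α) (s, x) *
      (kron α β / (d : ℝ) * gradQsq Q (s, x)) =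
        px α (fun q => u q α) (s, x) * (1 / (d : ℝ) * gradQsq Q (s, x)) := by
      intro α
      rw [Finset.sum_eq_single α]
      · simp [kron]
      · intro β _ hb
        simp [kron, Ne.symm hb]
      · simp
    simp only [this]
    rw [← Finset.sum_mul, hd, zero_mul]
  unfold stS
  simp only [mul_sub, Finset.sum_sub_distrib, e, sub_zero, Finset.mul_sum]
  have c1 : ∀ F : Fin d → Fin d → Fin 3 → Fin 3 → ℝ, ∑ α, ∑ β, ∑ ζ, ∑ δ, F α β ζ δ =
      ∑ ζ, ∑ δ, ∑ α, ∑ β, F α β ζ δ := by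
    intro F
    simp only [Fin.sum_univ_three, Finset.sum_add_distrib]
  exact c1 _

/-- transport of `Q` against `ΔQ`. -/
theorem Sol.n7 (S : Sol t R L Γ a b c ν Q u P) :
    Null t (fun p => (∑ ζ : Fin 3, ∑ δ : Fin 3, ∑ α : Fin d, ∑ β : Fin d,
      px β (fun q => u q α) p * (px α (fun r => Q r ζ δ) p * px β (fun r => Q r ζ δ) p))
      + ∑ ζ, ∑ δ, lap (fun q => Q q ζ δ) p * (∑ γ : Fin d, u p γ * px γ (fun q => Q q ζ δ) p)) := by
  have hq : ∀ α β, Sm (fun q => Q q α β) := fun α β => (S.hQ α β).sm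
  have hs : ∀ (γ : Fin d) α β, Sm (px γ fun q => Q q α β) := fun γ α β => ((S.hQ α β).px γ).sm
  have k1 := Null.sum fun ζ : Fin 3 => Null.sum fun δ : Fin 3 => Null.sum fun α : Fin d =>
    Null.sum fun β : Fin d => Null.parts (S.hu α) ((hs α ζ δ).mul' (hs β ζ δ)) β
  have k2 := (S.transport S.good_grad.sm).const_mul (-1 / 2)
  refine (k1.add k2).congr fun s x _ _ => ?_
  have c1 : ∀ F : Fin d → Fin d → Fin 3 → Fin 3 → ℝ, ∑ α, ∑ β, ∑ ζ, ∑ δ, F α β ζ δ =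
      ∑ ζ, ∑ δ, ∑ α, ∑ β, F α β ζ δ := by
    intro F
    simp only [Fin.sum_univ_three, Finset.sum_add_distrib]
  have e1 : -1 / 2 * ∑ β, u (s, x) β * px β (gradQsq Q) (s, x) =
      ∑ ζ : Fin 3, ∑ δ : Fin 3, ∑ α : Fin d, ∑ β : Fin d, - (u (s, x) α *
        (px β (px α (fun q => Q q ζ δ)) (s, x) * px β (fun q => Q q ζ δ) (s, x))) := by
    rw [← c1]
    simp only [S.px_grad, Finset.mul_sum]
    refine Finset.sum_congr rfl fun α _ => Finset.sum_congr rfl fun β _ =>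
      Finset.sum_congr rfl fun ζ _ => Finset.sum_congr rfl fun δ _ => ?_
    rw [px_comm (hq ζ δ) α β]; ring
  have e2 : ∀ ζ δ, lap (fun q => Q q ζ δ) (s, x) *
      (∑ γ : Fin d, u (s, x) γ * px γ (fun q => Q q ζ δ) (s, x)) = ∑ α : Fin d, ∑ β : Fin d,
        u (s, x) α * px α (fun q => Q q ζ δ) (s, x) * px β (px β (fun q => Q q ζ δ)) (s, x) := by
    intro ζ δ
    unfold lap
    rw [Finset.sum_mul_sum, Finset.sum_comm]
    refine Finset.sum_congr rfl fun α _ => Finset.sum_congr rfl fun β _ => ?_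
    ring
  rw [e1]
  simp only [e2, ← Finset.sum_add_distrib]
  refine Finset.sum_congr rfl fun ζ _ => Finset.sum_congr rfl fun δ _ =>
      Finset.sum_congr rfl fun α _ => Finset.sum_congr rfl fun β _ => ?_
  rw [px_mul (hs _ _ _) (hs _ _ _)]; ring

theorem Sol.energy_null (hd : d = 2 ∨ d = 3) (S : Sol t R L Γ a b c ν Q u P) :
    Null t (fun p => pt (fun p => (∑ α, u p α * u p α) + L * gradQsq Q p) p
      + 2 * ν * (∑ α, ∑ β, px β (fun q => u q α) p ^ 2)
      + 2 * Γ * L ^ 2 * (∑ α, ∑ β, lap (fun q => Q q α β) p ^ 2)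
      + 2 * Γ * L * (∑ α, ∑ β, lap (fun q => Q q α β) p * bulk a b c (Q p) α β)) := by
  have hq : ∀ α β, Sm (fun q => Q q α β) := fun α β => (S.hQ α β).sm
  have n1 := S.transport S.good_kin.sm
  have n2 := Null.sum fun α => Null.sum fun β => Null.parts (S.hu α) ((S.hu α).px β).sm β
  have n3 := S.transport S.hP.sm
  have n4 := Null.sum fun α => Null.sum fun β => Null.parts (S.hu α) (S.sm_S α β) β
  have n5 := Null.sum fun α => Null.sum fun β =>
    Null.parts (S.hu α) (S.sm_A (e3 α) (e3 β)) β
  have n6 := Null.sum fun α => Null.sum fun β => Null.sum fun γ : Fin d =>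
    Null.parts ((S.hQ α β).px γ) (hq α β).pt γ
  have n7 := S.n7
  refine ((((((n1.const_mul (-1)).add (n2.const_mul (2 * ν))).add (n3.const_mul 2)).add
    (n4.const_mul (-2 * L))).add (n5.const_mul (2 * L))).add (n6.const_mul (2 * L))).add
    (n7.const_mul (2 * L)) |>.congr fun s x h0 h1 => ?_
  have hkin := S.momentum (x := x) h0 h1
  have hlq := S.lapQ_pt (x := x) h0 h1
  have hst := S.stress (x := x) h0 h1
  have hv := vort_dot hd u (s, x) (A := fun α β => stA Q α β (s, x)) (stA_anti S (s, x))
  rw [pt_add S.good_kin.sm ((Sm.const L).mul' S.good_grad.sm), pt_mul (Sm.const L) S.good_grad.sm,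
    pt_const, S.pt_kin, S.pt_grad, hkin]
  have e2 : ∑ α, u (s, x) α * lap (fun q => u q α) (s, x) =
      ∑ α, ∑ β, u (s, x) α * px β (px β (fun q => u q α)) (s, x) := by
    unfold lap; simp only [Finset.mul_sum]
  have e6 : ∑ α, ∑ β, lap (fun q => Q q α β) (s, x) * pt (fun q => Q q α β) (s, x) =
      ∑ α, ∑ β, ∑ γ : Fin d, px γ (px γ (fun q => Q q α β)) (s, x) *
        pt (fun q => Q q α β) (s, x) := by
    unfold lap; simp only [Finset.sum_mul]
  have e7 : ∑ γ : Fin d, ∑ α : Fin 3, ∑ β : Fin 3,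
      px γ (fun q => Q q α β) (s, x) * px γ (pt (fun q => Q q α β)) (s, x) =
      ∑ α : Fin 3, ∑ β : Fin 3, ∑ γ : Fin d,
      px γ (fun q => Q q α β) (s, x) * px γ (pt (fun q => Q q α β)) (s, x) := by
    simp only [Fin.sum_univ_three, Finset.sum_add_distrib]
  rw [e7]
  simp only [Finset.sum_add_distrib, pow_two]
  simp only [pow_two] at hlq
  rw [← e2, ← e6, hlq, hst, hv]
  ring

theorem Sol.final (hd : d = 2 ∨ d = 3) (S : Sol t R L Γ a b c ν Q u P) (ht : 0 < t) (hc : 0 < c)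
    (hL : 0 < L) (hΓ : 0 < Γ) {K M : ℝ} (hK : K = 6 * Γ * (|a| + b ^ 2 / (4 * c)))
    (hM : M = 3 * (a ^ 2 + b ^ 2 + c ^ 2)) :
    (∫ x : Fin d → ℝ, ∑ α : Fin d, (u (t, x) α) ^ 2)
          + 2 * ν * (∫ s in (0:ℝ)..t, ∫ x : Fin d → ℝ,
              ∑ α : Fin d, ∑ β : Fin d, (px β (fun q => u q α) (s, x)) ^ 2)
          + L * (∫ x : Fin d → ℝ, gradQsq Q (t, x))
          + Γ * L ^ 2 * (∫ s in (0:ℝ)..t, ∫ x : Fin d → ℝ,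
              ∑ α : Fin 3, ∑ β : Fin 3, (lap (fun q => Q q α β) (s, x)) ^ 2)
        ≤ (∫ x : Fin d → ℝ, ∑ α : Fin d, (u (0, x) α) ^ 2)
          + L * (∫ x : Fin d → ℝ, gradQsq Q (0, x))
          + Γ * M * (t * Real.exp (K * t)) *
              ((∫ x : Fin d → ℝ, trQ2 Q (0, x)) + ∫ x : Fin d → ℝ, (trQ2 Q (0, x)) ^ 3) := by
  have hM0 : 0 ≤ M := by rw [hM]; positivity
  have hK0 : 0 ≤ K := by rw [hK]; positivity
  have gq := S.good_trQ2
  have gq3 : Good t R (fun p => trQ2 Q p ^ 3) := by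
    have := (gq.mul_right gq.sm).mul_right gq.sm
    have e : (fun p => trQ2 Q p ^ 3) = fun p => trQ2 Q p * trQ2 Q p * trQ2 Q p :=
      funext fun p => by ring
    rw [e]; exact this
  have gy := gq.add gq3
  have gk : Good t R (fun p => ∑ α : Fin d, (u p α) ^ 2) := by
    simp only [pow_two]; exact S.good_kin
  have gG := S.good_grad
  have gU : Good t R (fun p => ∑ α : Fin d, ∑ β : Fin d, (px β (fun q => u q α) p) ^ 2) := by
    simp only [pow_two]
    exact Good.sum fun α => Good.sum fun β => ((S.hu α).px β).mul_right ((S.hu α).px β).sm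
  have gL : Good t R (fun p => ∑ α : Fin 3, ∑ β : Fin 3, (lap (fun q => Q q α β) p) ^ 2) := by
    simp only [pow_two]
    exact Good.sum fun α => Good.sum fun β => ((S.hQ α β).lap).mul_right ((S.hQ α β).lap).sm
  have ge := gk.add (gG.const_mul L)
  have gp := ge.pt ht
  have N := S.energy_null hd
  simp only [← pow_two] at N
  have step : ∀ s, 0 ≤ s → s ≤ t →
      (∫ x, pt (fun p => (∑ α : Fin d, (u p α) ^ 2) + L * gradQsq Q p) (s, x))
      + 2 * ν * (∫ x, ∑ α : Fin d, ∑ β : Fin d, (px β (fun q => u q α) (s, x)) ^ 2)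
      + Γ * L ^ 2 * (∫ x, ∑ α : Fin 3, ∑ β : Fin 3, (lap (fun q => Q q α β) (s, x)) ^ 2)
      ≤ Γ * M * ∫ x, (trQ2 Q (s, x) + trQ2 Q (s, x) ^ 3) := by
    intro s h0 h1
    have hN := N s h0 h1
    have i1 := gp.integrable h0 h1
    have i2 := (gU.integrable h0 h1).const_mul (2 * ν)
    have i3 := (gL.integrable h0 h1).const_mul (Γ * L ^ 2)
    have i4 := (gy.integrable h0 h1).const_mul (Γ * M)
    have i12 := i1.add i2
    simp only [Pi.add_def] at i12
    rw [← integral_const_mul, ← integral_const_mul, ← integral_const_mul, ← integral_add i1 i2,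
      ← integral_add i12 i3, ← zero_add (∫ x, Γ * M * _), ← hN.2, ← integral_add hN.1 i4]
    refine integral_mono (i12.add i3) (hN.1.add i4) fun x => ?_
    have hb := bulk_sq (a := a) (b := b) (c := c) (S.sym (s, x))
    rw [← hM, ← trQ2_tr2] at hb
    have hb2 := mul_le_mul_of_nonneg_left hb hΓ.le
    have key : 0 ≤ ∑ α, ∑ β, Γ * (L * lap (fun q => Q q α β) (s, x)
        + bulk a b c (Q (s, x)) α β) ^ 2 := by positivity
    have e : ∑ α, ∑ β, Γ * (L * lap (fun q => Q q α β) (s, x)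
        + bulk a b c (Q (s, x)) α β) ^ 2 =
        Γ * L ^ 2 * (∑ α, ∑ β, lap (fun q => Q q α β) (s, x) ^ 2)
        + 2 * Γ * L * (∑ α, ∑ β, lap (fun q => Q q α β) (s, x) * bulk a b c (Q (s, x)) α β)
        + Γ * ∑ α, ∑ β, bulk a b c (Q (s, x)) α β ^ 2 := by
      simp only [Finset.mul_sum, ← Finset.sum_add_distrib]
      refine Finset.sum_congr rfl fun α _ => Finset.sum_congr rfl fun β _ => ?_
      ring
    rw [e] at key
    simp only [Pi.add_apply]
    linarith
  have low : ∀ s, 0 ≤ s → s ≤ t → ∫ x, (trQ2 Q (s, x) + trQ2 Q (s, x) ^ 3) ≤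
      Real.exp (K * t) * ∫ x, (trQ2 Q (0, x) + trQ2 Q (0, x) ^ 3) := by
    intro s h0 h1
    have hnn : 0 ≤ ∫ x, (trQ2 Q (0, x) + trQ2 Q (0, x) ^ 3) := by
      apply integral_nonneg
      intro x
      have := tr2_nonneg (S.sym (0, x))
      rw [← trQ2_tr2] at this
      simp only [Pi.zero_apply]; positivity
    rcases h0.eq_or_lt with rfl | h0
    · have : 1 ≤ Real.exp (K * t) := Real.one_le_exp (by positivity)
      nlinarith
    · refine ((S.mono h1).low h0 hc hL hΓ hK).trans ?_
      gcongr
  have hint := intervalIntegral.integral_mono_on ht.le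
    ((((gp.intervalIntegrable ht.le).add ((gU.intervalIntegrable ht.le).const_mul (2 * ν))).add
      ((gL.intervalIntegrable ht.le).const_mul (Γ * L ^ 2))))
    (intervalIntegrable_const (c := Γ * M *
      (Real.exp (K * t) * ∫ x, (trQ2 Q (0, x) + trQ2 Q (0, x) ^ 3))))
    (fun s hs => (step s hs.1 hs.2).trans
      (mul_le_mul_of_nonneg_left (low s hs.1 hs.2) (by positivity)))
  rw [intervalIntegral.integral_add
      ((gp.intervalIntegrable ht.le).add ((gU.intervalIntegrable ht.le).const_mul (2 * ν)))
      ((gL.intervalIntegrable ht.le).const_mul (Γ * L ^ 2)),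
    intervalIntegral.integral_add (gp.intervalIntegrable ht.le)
      ((gU.intervalIntegrable ht.le).const_mul (2 * ν)),
    intervalIntegral.integral_const_mul, intervalIntegral.integral_const_mul, ← ge.ftc ht,
    intervalIntegral.integral_const,
    integral_add (gk.integrable ht.le le_rfl) ((gG.const_mul L).integrable ht.le le_rfl),
    integral_add (gk.integrable le_rfl ht.le) ((gG.const_mul L).integrable le_rfl ht.le),
    integral_const_mul, integral_const_mul,
    integral_add (gq.integrable le_rfl ht.le) (gq3.integrable le_rfl ht.le), smul_eq_mul] at hint
  linarith

end solution

/-- The basic energy estimate for weak solutions: along smooth, uniformly compactly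
supported solutions of the Beris–Edwards system on `[0,T) × ℝ^d` (`d ∈ {2,3}`, `c > 0`),
there is a constant `C = C(a,b,c,d,L,Γ)` with
`‖u(t)‖²_{L²} + 2ν∫₀ᵗ‖∇u‖²_{L²} + L‖∇Q(t)‖²_{L²} + ΓL²∫₀ᵗ‖ΔQ‖²_{L²}
  ≤ ‖u(0)‖²_{L²} + L‖∇Q(0)‖²_{L²} + Ce^{Ct}(‖Q(0)‖²_{L²} + ‖Q(0)‖⁶_{L⁶})`. -/
theorem energy_apriori_estimate
    (d : ℕ) (hd : d = 2 ∨ d = 3) (a b c L Γ : ℝ) (hc : 0 < c) (hL : 0 < L) (hΓ : 0 < Γ) :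
    ∃ C : ℝ, ∀ (T : ℝ≥0∞), 0 < T → ∀ (ν : ℝ), 0 < ν →
      ∀ (Q : ℝ × (Fin d → ℝ) → Fin 3 → Fin 3 → ℝ)
        (u : ℝ × (Fin d → ℝ) → Fin d → ℝ)
        (P : ℝ × (Fin d → ℝ) → ℝ),
      ContDiff ℝ (⊤ : ℕ∞) Q → ContDiff ℝ (⊤ : ℕ∞) u → ContDiff ℝ (⊤ : ℕ∞) P →
      (∀ q α β, Q q α β = Q q β α) → (∀ q, ∑ α, Q q α α = 0) →
      (∀ t₀ : ℝ, 0 ≤ t₀ → ENNReal.ofReal t₀ < T →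
        ∃ R : ℝ, ∀ t : ℝ, ∀ x : Fin d → ℝ, 0 ≤ t → t ≤ t₀ → R ≤ ‖x‖ →
          Q (t, x) = 0 ∧ u (t, x) = 0 ∧ P (t, x) = 0) →
      (∀ t : ℝ, ∀ x : Fin d → ℝ, 0 ≤ t → ENNReal.ofReal t < T →
        QTensorEq L Γ a b c Q u (t, x) ∧ MomentumEq L ν Q u P (t, x) ∧ DivFree u (t, x)) →
      ∀ t : ℝ, 0 ≤ t → ENNReal.ofReal t < T →
        (∫ x : Fin d → ℝ, ∑ α : Fin d, (u (t, x) α) ^ 2)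
          + 2 * ν * (∫ s in (0:ℝ)..t, ∫ x : Fin d → ℝ,
              ∑ α : Fin d, ∑ β : Fin d, (px β (fun q => u q α) (s, x)) ^ 2)
          + L * (∫ x : Fin d → ℝ, gradQsq Q (t, x))
          + Γ * L ^ 2 * (∫ s in (0:ℝ)..t, ∫ x : Fin d → ℝ,
              ∑ α : Fin 3, ∑ β : Fin 3, (lap (fun q => Q q α β) (s, x)) ^ 2)
        ≤ (∫ x : Fin d → ℝ, ∑ α : Fin d, (u (0, x) α) ^ 2)
          + L * (∫ x : Fin d → ℝ, gradQsq Q (0, x))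
          + C * Real.exp (C * t) *
              ((∫ x : Fin d → ℝ, trQ2 Q (0, x)) + ∫ x : Fin d → ℝ, (trQ2 Q (0, x)) ^ 3) := by
  refine ⟨Γ * (3 * (a ^ 2 + b ^ 2 + c ^ 2)) + 6 * Γ * (|a| + b ^ 2 / (4 * c)) + 1, ?_⟩
  intro T _ ν _ Q u P hQ hu hP hsym htr hsupp heq t ht htT
  obtain ⟨K, hK⟩ : ∃ K, K = 6 * Γ * (|a| + b ^ 2 / (4 * c)) := ⟨_, rfl⟩
  obtain ⟨M, hM⟩ : ∃ M, M = 3 * (a ^ 2 + b ^ 2 + c ^ 2) := ⟨_, rfl⟩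
  rw [← hK, ← hM]
  have hM0 : 0 ≤ M := by rw [hM]; positivity
  have hK0 : 0 ≤ K := by rw [hK]; positivity
  have hnn : 0 ≤ (∫ x : Fin d → ℝ, trQ2 Q (0, x)) + ∫ x : Fin d → ℝ, (trQ2 Q (0, x)) ^ 3 := by
    have h : ∀ x, 0 ≤ trQ2 Q (0, x) := fun x => tr2_nonneg (hsym (0, x))
    exact add_nonneg (integral_nonneg h) (integral_nonneg fun x => pow_nonneg (h x) 3)
  have hΓM : 0 ≤ Γ * M := by positivity
  rcases ht.eq_or_lt with rfl | ht0
  · simp only [intervalIntegral.integral_same, mul_zero, add_zero]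
    have : 0 ≤ (Γ * M + K + 1) * Real.exp 0 *
      ((∫ x : Fin d → ℝ, trQ2 Q (0, x)) + ∫ x : Fin d → ℝ, (trQ2 Q (0, x)) ^ 3) := by positivity
    linarith
  obtain ⟨R, hR⟩ := hsupp t ht htT
  have hlt : ∀ s, s ≤ t → ENNReal.ofReal s < T := fun s hs =>
    (ENNReal.ofReal_le_ofReal hs).trans_lt htT
  have S : Sol t R L Γ a b c ν Q u P :=
    { hQ := fun α β => ⟨contDiff_pi.1 (contDiff_pi.1 hQ α) β, fun s x h0 h1 hx => by
        rw [(hR s x h0 h1 hx.le).1]; rfl⟩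
      hu := fun α => ⟨contDiff_pi.1 hu α, fun s x h0 h1 hx => by
        rw [(hR s x h0 h1 hx.le).2.1]; rfl⟩
      hP := ⟨hP, fun s x h0 h1 hx => (hR s x h0 h1 hx.le).2.2⟩
      sym := hsym
      tr0 := htr
      eqQ := fun s x h0 h1 => (heq s x h0 (hlt s h1)).1
      eqU := fun s x h0 h1 => (heq s x h0 (hlt s h1)).2.1
      dv := fun s x h0 h1 => (heq s x h0 (hlt s h1)).2.2 }
  refine (S.final hd ht0 hc hL hΓ hK hM).trans ?_
  have h1 : t ≤ Real.exp t := by have := Real.add_one_le_exp t; linarith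
  have h2 : t * Real.exp (K * t) ≤ Real.exp ((Γ * M + K + 1) * t) := by
    calc t * Real.exp (K * t) ≤ Real.exp t * Real.exp (K * t) := by gcongr
      _ = Real.exp (t + K * t) := by rw [Real.exp_add]
      _ ≤ _ := by
        apply Real.exp_le_exp.2
        nlinarith [mul_nonneg hΓM ht]
  have h3 : Γ * M * (t * Real.exp (K * t)) ≤
      (Γ * M + K + 1) * Real.exp ((Γ * M + K + 1) * t) := by
    apply mul_le_mul (by linarith) h2 (by positivity) (by positivity)
  have h4 := mul_le_mul_of_nonneg_right h3 hnn
  linarith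
end
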